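/- Let C(Γ) be an infinite finitely generated Coxeter group. Then C(Γ) is slender if and only if C(Γ) decomposes as a direct product C(Γ) ≅ C(Γ₁) × C(Γ₂), where Γ₁, Γ₂ are induced subgraphs of Γ, C(Γ₁) is a finite group, and C(Γ₂) is a finite direct product of irreducible Euclidean reflection groups. -/

import Mathlib

def Group.Slender (G : Type*) [Group G] : Prop := ∀ H : Subgroup G, H.FG

def Group.FinitelyPresented (G : Type*) [Group G] : Prop :=
  ∃ (n : ℕ) (rels : Set (FreeGroup (Fin n))), rels.Finite ∧ Nonempty (PresentedGroup rels ≃* G)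

def Group.Coherent (G : Type*) [Group G] : Prop :=
  ∀ H : Subgroup G, H.FG → Group.FinitelyPresented H

def SimpleGraph.NoInducedCycleGT3 {V : Type*} (Γ : SimpleGraph V) : Prop :=
  ∀ n : ℕ, 4 ≤ n → IsEmpty (SimpleGraph.cycleGraph n ↪g Γ)

/-- The restriction of a Coxeter matrix to a set of indices
(corresponding to an induced subgraph of the Coxeter graph). -/
def CoxeterMatrix.restrict {V : Type*} (M : CoxeterMatrix V) (S : Set V) : CoxeterMatrix S where
  M a b := M a b
  isSymm := Matrix.IsSymm.ext fun a b => M.isSymm.apply a b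
  diagonal a := M.diagonal a
  off_diagonal a b h := M.off_diagonal a b (fun hc => h (Subtype.ext hc))

/-- `M` is the Coxeter matrix associated to the simplicial graph `Γ` with edge labeling
`ψ : E → {2,3,4,...}` (recorded by the values of `M` on adjacent pairs): non-adjacent
distinct vertices get the label `0` (that is, `∞`: no relation). -/
def CoxeterMatrix.IsMatrixOf {V : Type*} (M : CoxeterMatrix V) (Γ : SimpleGraph V) : Prop :=
  (∀ v w, Γ.Adj v w → 2 ≤ M v w) ∧ (∀ v w, v ≠ w → ¬Γ.Adj v w → M v w = 0)

/-- An isometry of the Euclidean space `ℝᵈ` is an affine (hyperplane) reflection if it is an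
involution different from the identity whose fixed-point set is an affine hyperplane. -/
def IsAffineReflection {d : ℕ}
    (f : EuclideanSpace ℝ (Fin d) ≃ᵢ EuclideanSpace ℝ (Fin d)) : Prop :=
  f * f = 1 ∧ f ≠ 1 ∧
  ∃ s : AffineSubspace ℝ (EuclideanSpace ℝ (Fin d)),
    (s : Set (EuclideanSpace ℝ (Fin d))) = {x | f x = x} ∧
    Module.finrank ℝ s.direction + 1 = d

/-- A subgroup `W` of the isometry group of the Euclidean space `ℝᵈ` is an irreducible
Euclidean reflection group if it is generated by the affine reflections it contains, it acts
properly (properly discontinuously) on `ℝᵈ` with compact quotient, and its Coxeter diagram is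
connected, which amounts to saying that no linear subspace other than `0` and `ℝᵈ` is
invariant under the linear parts of all elements of `W`. -/
structure IsIrreducibleEuclideanReflectionSubgroup {d : ℕ}
    (W : Subgroup (EuclideanSpace ℝ (Fin d) ≃ᵢ EuclideanSpace ℝ (Fin d))) : Prop where
  generated_by_reflections : W = Subgroup.closure {f | f ∈ W ∧ IsAffineReflection f}
  properly_discontinuous : ∀ K L : Set (EuclideanSpace ℝ (Fin d)), IsCompact K → IsCompact L →
    {f : EuclideanSpace ℝ (Fin d) ≃ᵢ EuclideanSpace ℝ (Fin d) |
      f ∈ W ∧ (f '' K ∩ L).Nonempty}.Finite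
  compact_quotient : ∃ K : Set (EuclideanSpace ℝ (Fin d)), IsCompact K ∧
    ∀ x : EuclideanSpace ℝ (Fin d), ∃ f ∈ W, f x ∈ K
  irreducible : ∀ U : Submodule ℝ (EuclideanSpace ℝ (Fin d)),
    (∀ f ∈ W, ∀ x y : EuclideanSpace ℝ (Fin d), x - y ∈ U → f x - f y ∈ U) →
    U = ⊥ ∨ U = ⊤

set_option linter.unusedSimpArgs false

section Geom

open CoxeterSystem

/-- The reflection `x ↦ x - 2 B(a,x) a`. -/
noncomputable def bRefl {V : Type*} [AddCommGroup V] [Module ℝ V] (B : LinearMap.BilinForm ℝ V)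
    (a : V) : Module.End ℝ V := LinearMap.id - (2 : ℝ) • (B a).smulRight a

theorem bRefl_apply {V : Type*} [AddCommGroup V] [Module ℝ V] (B : LinearMap.BilinForm ℝ V)
    (a x : V) : bRefl B a x = x - (2 * B a x) • a := by
  simp [bRefl, smul_smul]

theorem bRefl_preserves {V : Type*} [AddCommGroup V] [Module ℝ V] (B : LinearMap.BilinForm ℝ V)
    (hs : ∀ x y, B x y = B y x)
    (a x y : V) (ha : B a a = 1) : B (bRefl B a x) (bRefl B a y) = B x y := by
  simp [bRefl_apply, ha, hs x a]
  ring

/-- Chebyshev-like sequence. -/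
noncomputable def chebU (c : ℝ) : ℕ → ℝ
  | 0 => 0
  | 1 => 1
  | (n + 2) => 2 * c * chebU c (n + 1) - chebU c n

theorem chebU_one (n : ℕ) : chebU 1 n = n := by
  induction n using Nat.strong_induction_on with
  | _ n ih =>
    match n with
    | 0 => simp [chebU]
    | 1 => simp [chebU]
    | (n + 2) =>
      rw [chebU, ih (n + 1) (by omega), ih n (by omega)]
      push_cast; ring

theorem chebU_sin (t : ℝ) (n : ℕ) : chebU (Real.cos t) n * Real.sin t = Real.sin (n * t) := by
  induction n using Nat.strong_induction_on with
  | _ n ih =>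
    match n with
    | 0 => simp [chebU]
    | 1 => simp [chebU]
    | (n + 2) =>
      have h1 := ih (n + 1) (by omega)
      have h2 := ih n (by omega)
      rw [chebU, sub_mul, mul_assoc, h1, h2]
      have e1 : ((n + 2 : ℕ) : ℝ) * t = ((n + 1 : ℕ) : ℝ) * t + t := by push_cast; ring
      have e2 : ((n : ℕ) : ℝ) * t = ((n + 1 : ℕ) : ℝ) * t - t := by push_cast; ring
      rw [e1, e2, Real.sin_add, Real.sin_sub]
      ring

theorem chebU_nonneg (m k : ℕ) (hm : m ≠ 1) (hk : m ≠ 0 → k ≤ m) :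
    0 ≤ chebU (Real.cos (Real.pi / m)) k := by
  by_cases h0 : m = 0
  · subst h0
    simp [chebU_one]
  · have hm2 : 2 ≤ m := by omega
    have hmR : (2 : ℝ) ≤ m := by exact_mod_cast hm2
    have hpi := Real.pi_pos
    have hs : 0 < Real.sin (Real.pi / m) := by
      apply Real.sin_pos_of_pos_of_lt_pi
      · positivity
      · rw [div_lt_iff₀ (by positivity)]
        nlinarith
    have h := chebU_sin (Real.pi / m) k
    have hk' : (k : ℝ) ≤ m := by exact_mod_cast hk h0
    have h2 : 0 ≤ Real.sin (k * (Real.pi / m)) := by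
      apply Real.sin_nonneg_of_nonneg_of_le_pi
      · positivity
      · rw [← mul_div_assoc, div_le_iff₀ (by positivity)]
        nlinarith
    rw [← h] at h2
    exact nonneg_of_mul_nonneg_left h2 hs

theorem bRefl_pow_left {V : Type*} [AddCommGroup V] [Module ℝ V] (B : LinearMap.BilinForm ℝ V)
    (a b : V) (c : ℝ) (ha : B a a = 1) (hb : B b b = 1) (hab : B a b = -c) (hba : B b a = -c)
    (n : ℕ) : ((bRefl B a * bRefl B b) ^ n) a = chebU c (2 * n + 1) • a + chebU c (2 * n) • b := by
  induction n with
  | zero => simp [chebU]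
  | succ n ih =>
    rw [pow_succ', Module.End.mul_apply, ih, Module.End.mul_apply]
    have e1 : chebU c (2 * (n + 1)) = 2 * c * chebU c (2 * n + 1) - chebU c (2 * n) := by
      rw [show 2 * (n + 1) = 2 * n + 2 by ring, chebU]
    have e2 : chebU c (2 * (n + 1) + 1) = 2 * c * chebU c (2 * n + 2) - chebU c (2 * n + 1) := by
      rw [show 2 * (n + 1) + 1 = (2 * n + 1) + 2 by ring, chebU]
    rw [show 2 * n + 2 = 2 * (n + 1) by ring, e1] at e2
    rw [e1, e2]
    simp only [bRefl_apply, map_add, map_smul, map_sub, smul_eq_mul, ha, hb, hab, hba]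
    module

theorem bRefl_pow_right {V : Type*} [AddCommGroup V] [Module ℝ V] (B : LinearMap.BilinForm ℝ V)
    (a b : V) (c : ℝ) (ha : B a a = 1) (hb : B b b = 1) (hab : B a b = -c) (hba : B b a = -c)
    (n : ℕ) : ((bRefl B a * bRefl B b) ^ (n + 1)) b =
      (-chebU c (2 * n + 2)) • a + (-chebU c (2 * n + 1)) • b := by
  have : ((bRefl B a * bRefl B b) ^ (n + 1)) b =
      ((bRefl B a * bRefl B b) ^ n) ((-1 : ℝ) • b - (2 * c) • a) := by
    rw [pow_succ, Module.End.mul_apply, Module.End.mul_apply]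
    congr 1
    simp only [bRefl_apply, map_add, map_smul, map_sub, smul_eq_mul, ha, hb, hab, hba]
    module
  induction n with
  | zero =>
    rw [this]
    simp [chebU]
    module
  | succ n ih =>
    rw [this, map_sub, map_smul, map_smul, bRefl_pow_left B a b c ha hb hab hba, ih]
    · have e1 : chebU c (2 * (n + 1)) = chebU c (2 * n + 2) := rfl
      have e2 : chebU c (2 * (n + 1) + 1) = 2 * c * chebU c (2 * n + 2) - chebU c (2 * n + 1) := rfl
      have e3 : chebU c (2 * (n + 1) + 2) = 2 * c * chebU c (2 * (n + 1) + 1) - chebU c (2 * n + 2) := rfl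
      rw [e3, e2, e1]
      module
    · rw [pow_succ, Module.End.mul_apply, Module.End.mul_apply]
      congr 1
      simp only [bRefl_apply, map_add, map_smul, map_sub, smul_eq_mul, ha, hb, hab, hba]
      module

theorem bRefl_fix {V : Type*} [AddCommGroup V] [Module ℝ V] (B : LinearMap.BilinForm ℝ V)
    (a b q : V) (ha : B a q = 0) (hb : B b q = 0) (n : ℕ) :
    ((bRefl B a * bRefl B b) ^ n) q = q := by
  induction n with
  | zero => simp
  | succ n ih =>
    rw [pow_succ, Module.End.mul_apply, Module.End.mul_apply, bRefl_apply B b, hb]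
    simp [bRefl_apply B a, ha, ih]

theorem bRefl_relation {V : Type*} [AddCommGroup V] [Module ℝ V] (B : LinearMap.BilinForm ℝ V)
    (a b : V) (m : ℕ) (hm : m ≠ 1) (ha : B a a = 1) (hb : B b b = 1)
    (hab : B a b = -Real.cos (Real.pi / m)) (hba : B b a = -Real.cos (Real.pi / m)) :
    (bRefl B a * bRefl B b) ^ m = 1 := by
  by_cases h0 : m = 0
  · simp [h0]
  have hm2 : 2 ≤ m := by omega
  have hmR : (2 : ℝ) ≤ m := by exact_mod_cast hm2
  have hpi := Real.pi_pos
  set t := Real.pi / m with ht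
  have hs : 0 < Real.sin t := by
    apply Real.sin_pos_of_pos_of_lt_pi
    · positivity
    · rw [ht, div_lt_iff₀ (by positivity)]
      nlinarith
  have hmt : (m : ℝ) * t = Real.pi := by rw [ht]; field_simp
  set c := Real.cos t with hc
  have hsc : Real.sin t ^ 2 + c ^ 2 = 1 := Real.sin_sq_add_cos_sq t
  have hU (n : ℕ) (y : ℝ) (h : Real.sin (n * t) = y * Real.sin t) : chebU c n = y := by
    have := chebU_sin t n
    rw [h] at this
    exact mul_right_cancel₀ hs.ne' this
  have hA : ((bRefl B a * bRefl B b) ^ m) a = a := by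
    rw [bRefl_pow_left B a b c ha hb hab hba, hU (2 * m + 1) 1, hU (2 * m) 0]
    · simp
    · push_cast
      rw [mul_assoc, hmt]
      simp
    · push_cast
      rw [add_mul, mul_assoc, hmt, Real.sin_add]
      simp
  have hB : ((bRefl B a * bRefl B b) ^ m) b = b := by
    obtain ⟨n, rfl⟩ : ∃ n, m = n + 1 := ⟨m - 1, by omega⟩
    rw [bRefl_pow_right B a b c ha hb hab hba, hU (2 * n + 2) 0, hU (2 * n + 1) (-1)]
    · simp
    · have : ((2 * n + 1 : ℕ) : ℝ) * t = 2 * Real.pi - t := by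
        rw [← hmt]; push_cast; ring
      rw [this, Real.sin_sub]
      simp
    · have : ((2 * n + 2 : ℕ) : ℝ) * t = 2 * Real.pi := by
        rw [← hmt]; push_cast; ring
      rw [this]
      simp
  ext z
  set x := (B a z + c * B b z) / Real.sin t ^ 2 with hx
  set y := (B b z + c * B a z) / Real.sin t ^ 2 with hy
  have hx' : x * Real.sin t ^ 2 = B a z + c * B b z := by rw [hx]; field_simp
  have hy' : y * Real.sin t ^ 2 = B b z + c * B a z := by rw [hy]; field_simp
  have hs2 : Real.sin t ^ 2 ≠ 0 := by positivity
  have hz : z = x • a + y • b + (z - x • a - y • b) := by abel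
  rw [hz, map_add, bRefl_fix B a b (z - x • a - y • b), map_add, map_smul, map_smul, hA, hB]
  · simp
  · simp only [map_sub, map_smul, smul_eq_mul, ha, hb, hab, hba]
    apply mul_right_cancel₀ hs2
    have : (B a z - x * 1 - y * -c) * Real.sin t ^ 2 =
      B a z * Real.sin t ^ 2 - x * Real.sin t ^ 2 + c * (y * Real.sin t ^ 2) := by ring
    rw [this, hx', hy']
    linear_combination (B a z) * hsc
  · simp only [map_sub, map_smul, smul_eq_mul, ha, hb, hab, hba]
    apply mul_right_cancel₀ hs2
    have : (B b z - x * -c - y * 1) * Real.sin t ^ 2 =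
      B b z * Real.sin t ^ 2 - y * Real.sin t ^ 2 + c * (x * Real.sin t ^ 2) := by ring
    rw [this, hx', hy']
    linear_combination (B b z) * hsc

variable {ι : Type*} [Fintype ι] [DecidableEq ι]

/-- The canonical bilinear form of a Coxeter matrix. -/
noncomputable def cxForm (M : CoxeterMatrix ι) : LinearMap.BilinForm ℝ (ι → ℝ) :=
  Matrix.toBilin' (Matrix.of fun i j => -Real.cos (Real.pi / M i j))

/-- Simple roots. -/
noncomputable def sroot (i : ι) : ι → ℝ := Pi.single i 1

theorem cxForm_sroot (M : CoxeterMatrix ι) (i j : ι) :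
    cxForm M (sroot i) (sroot j) = -Real.cos (Real.pi / M i j) := by
  simp [cxForm, sroot, Matrix.toBilin'_single]

theorem cxForm_self (M : CoxeterMatrix ι) (i : ι) : cxForm M (sroot i) (sroot i) = 1 := by
  simp [cxForm_sroot]

theorem cxForm_apply (M : CoxeterMatrix ι) (x y : ι → ℝ) :
    cxForm M x y = ∑ i, ∑ j, x i * -Real.cos (Real.pi / M i j) * y j := by
  simp [cxForm, Matrix.toBilin'_apply]

theorem cxForm_symm (M : CoxeterMatrix ι) (x y : ι → ℝ) : cxForm M x y = cxForm M y x := by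
  rw [cxForm_apply, cxForm_apply, Finset.sum_comm]
  refine Finset.sum_congr rfl fun i _ => Finset.sum_congr rfl fun j _ => ?_
  rw [M.symmetric]
  ring

theorem eq_sum_sroot (x : ι → ℝ) : x = ∑ i, x i • sroot i := by
  ext k
  simp [sroot, Pi.single_apply]

theorem cxForm_abs_le (M : CoxeterMatrix ι) (i j : ι) :
    |cxForm M (sroot i) (sroot j)| ≤ 1 := by
  rw [cxForm_sroot, abs_neg]
  exact Real.abs_cos_le_one _

theorem cxForm_nonpos (M : CoxeterMatrix ι) {i j : ι} (h : i ≠ j) :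
    cxForm M (sroot i) (sroot j) ≤ 0 := by
  rw [cxForm_sroot]
  have hm := M.off_diagonal i j h
  have hpi := Real.pi_pos
  have : 0 ≤ Real.cos (Real.pi / M i j) := by
    by_cases h0 : M i j = 0
    · simp [h0]
    · have h2 : 2 ≤ M i j := by omega
      have h2' : (2 : ℝ) ≤ M i j := by exact_mod_cast h2
      apply Real.cos_nonneg_of_neg_pi_div_two_le_of_le
      · have : 0 ≤ Real.pi / M i j := by positivity
        linarith
      · gcongr
  linarith

theorem cxForm_neg (M : CoxeterMatrix ι) {i j : ι} (h : i ≠ j) (h2 : M i j ≠ 2) :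
    cxForm M (sroot i) (sroot j) < 0 := by
  rw [cxForm_sroot]
  have hm := M.off_diagonal i j h
  have hpi := Real.pi_pos
  have : 0 < Real.cos (Real.pi / M i j) := by
    by_cases h0 : M i j = 0
    · simp [h0]
    · have h3 : 2 < M i j := by omega
      have h2' : (2 : ℝ) < M i j := by exact_mod_cast h3
      apply Real.cos_pos_of_mem_Ioo
      constructor
      · have : 0 ≤ Real.pi / M i j := by positivity
        linarith
      · gcongr
  linarith

theorem geom_liftable (M : CoxeterMatrix ι) :
    M.IsLiftable (fun i => bRefl (cxForm M) (sroot i)) := by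
  intro i j
  by_cases h : i = j
  · subst h
    rw [M.diagonal, pow_one]
    refine LinearMap.ext fun z => ?_
    simp only [Module.End.mul_apply, bRefl_apply, map_sub, map_smul, smul_eq_mul,
      cxForm_self, Module.End.one_apply]
    module
  · exact bRefl_relation _ _ _ _ (M.off_diagonal i j h) (cxForm_self M i) (cxForm_self M j)
      (cxForm_sroot M i j) (by rw [cxForm_sroot, M.symmetric])

/-- The geometric representation. -/
noncomputable def geom (M : CoxeterMatrix ι) : M.Group →* Module.End ℝ (ι → ℝ) :=
  M.toCoxeterSystem.lift ⟨_, geom_liftable M⟩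

theorem geom_simple (M : CoxeterMatrix ι) (i : ι) :
    geom M (M.simple i) = bRefl (cxForm M) (sroot i) :=
  M.toCoxeterSystem.lift_apply_simple (geom_liftable M) i

theorem geom_preserves (M : CoxeterMatrix ι) (w : M.Group) (x y : ι → ℝ) :
    cxForm M (geom M w x) (geom M w y) = cxForm M x y := by
  induction w using M.toCoxeterSystem.simple_induction_left generalizing x y with
  | one => simp
  | mul_simple_left w i ih =>
    rw [map_mul, Module.End.mul_apply, Module.End.mul_apply, M.toCoxeterSystem_simple, geom_simple,
      bRefl_preserves _ (cxForm_symm M) _ _ _ (cxForm_self M i), ih]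

theorem geom_alt (M : CoxeterMatrix ι) (i j : ι) (k : ℕ) :
    geom M (M.toCoxeterSystem.wordProd (alternatingWord i j k)) (sroot i) =
      if Even k then chebU (Real.cos (Real.pi / M i j)) (k + 1) • sroot i +
          chebU (Real.cos (Real.pi / M i j)) k • sroot j
        else chebU (Real.cos (Real.pi / M i j)) k • sroot i +
          chebU (Real.cos (Real.pi / M i j)) (k + 1) • sroot j := by
  have hij := cxForm_sroot M i j
  have hji := cxForm_sroot M j i
  rw [M.symmetric j i] at hji
  have hi := cxForm_self M i
  have hj := cxForm_self M j
  induction k with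
  | zero => simp [alternatingWord, chebU]
  | succ k ih =>
    rw [alternatingWord_succ', wordProd_cons, map_mul, Module.End.mul_apply, ih,
      M.toCoxeterSystem_simple, geom_simple]
    have e : chebU (Real.cos (Real.pi / M i j)) (k + 1 + 1) =
      2 * Real.cos (Real.pi / M i j) * chebU (Real.cos (Real.pi / M i j)) (k + 1) -
       chebU (Real.cos (Real.pi / M i j)) k := rfl
    rw [e]
    by_cases hk : Even k
    · have hk' : ¬ Even (k + 1) := by simpa [Nat.even_add_one] using hk
      simp only [hk, hk', if_true, if_false]
      simp only [bRefl_apply, map_add, map_smul, smul_eq_mul, hi, hj, hij, hji]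
      module
    · have hk' : Even (k + 1) := by simpa [Nat.even_add_one] using hk
      simp only [hk, hk', if_true, if_false]
      simp only [bRefl_apply, map_add, map_smul, smul_eq_mul, hi, hj, hij, hji]
      module

theorem geom_pos (M : CoxeterMatrix ι) (w : M.Group) (i : ι)
    (h : ¬ M.toCoxeterSystem.IsRightDescent w i) : 0 ≤ geom M w (sroot i) := by
  set cs := M.toCoxeterSystem with hcs
  induction hn : cs.length w using Nat.strong_induction_on generalizing w i with
  | _ n IH =>
    by_cases hw : w = 1
    · subst hw
      simp [sroot]
    obtain ⟨j, hj⟩ := cs.exists_rightDescent_of_ne_one hw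
    have hij : i ≠ j := by rintro rfl; exact h hj
    -- peel off an alternating word, as far as possible
    let P : ℕ → Prop := fun k => ∃ v, w = v * cs.wordProd (alternatingWord i j k) ∧
      cs.length v + k = cs.length w
    have hP1 : P 1 := by
      refine ⟨w * cs.simple j, ?_, ?_⟩
      · simp [alternatingWord]
      · exact cs.isRightDescent_iff.mp hj
    have hPb : ∀ k, P k → k ≤ cs.length w := by
      rintro k ⟨v, -, hv⟩; omega
    classical
    obtain ⟨k, hk1, hPk, hmax⟩ : ∃ k, 1 ≤ k ∧ P k ∧ ¬ P (k + 1) := by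
      by_contra hcon
      push Not at hcon
      have : ∀ k, P (k + 1) := by
        intro k
        induction k with
        | zero => exact hP1
        | succ k ih => exact hcon (k + 1) (by omega) ih
      have := hPb _ (this (cs.length w))
      omega
    obtain ⟨v, hv, hl⟩ := hPk
    have hvlt : cs.length v < n := by omega
    obtain ⟨k', rfl⟩ : ∃ k', k = k' + 1 := ⟨k - 1, by omega⟩
    -- the next letter
    have hnext : ¬ cs.IsRightDescent v (if Even (k' + 1) then j else i) := by
      intro hd
      apply hmax
      refine ⟨v * cs.simple (if Even (k' + 1) then j else i), ?_, ?_⟩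
      · rw [alternatingWord_succ', wordProd_cons, ← mul_assoc, simple_mul_simple_cancel_right]
        exact hv
      · have := cs.isRightDescent_iff.mp hd
        omega
    have hprev : ¬ cs.IsRightDescent v (if Even k' then j else i) := by
      intro hd
      have := cs.isRightDescent_iff.mp hd
      rw [alternatingWord_succ', wordProd_cons, ← mul_assoc] at hv
      have h1 : cs.length w ≤ cs.length (v * cs.simple (if Even k' then j else i)) + k' := by
        rw [hv]
        refine (cs.length_mul_le _ _).trans ?_
        gcongr
        exact (cs.length_wordProd_le _).trans (by simp)
      omega
    have hvij : ¬ cs.IsRightDescent v i ∧ ¬ cs.IsRightDescent v j := by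
      by_cases hk : Even k'
      · have hk' : ¬ Even (k' + 1) := by simpa [Nat.even_add_one] using hk
        simp only [hk, hk', if_true, if_false] at hnext hprev
        exact ⟨hnext, hprev⟩
      · have hk' : Even (k' + 1) := by simpa [Nat.even_add_one] using hk
        simp only [hk, hk', if_true, if_false] at hnext hprev
        exact ⟨hprev, hnext⟩
    have hkm : M i j ≠ 0 → k' + 1 + 1 ≤ M i j := by
      intro hm0
      by_contra hlt
      have hge : M i j ≤ k' + 1 := by omega
      -- the word ends with the braid word
      have hsplit : ∀ r, ∀ m, ∃ u : M.Group, cs.length u ≤ r ∧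
          cs.wordProd (alternatingWord i j (r + m)) = u * cs.wordProd (alternatingWord i j m) := by
        intro r m
        induction r with
        | zero => exact ⟨1, by simp, by simp⟩
        | succ r ih =>
          obtain ⟨u, hu, hu'⟩ := ih
          refine ⟨cs.simple (if Even (r + m) then j else i) * u, ?_, ?_⟩
          · refine (cs.length_mul_le _ _).trans ?_
            rw [cs.length_simple]
            omega
          · rw [show r + 1 + m = r + m + 1 by ring, alternatingWord_succ', wordProd_cons, hu',
              mul_assoc]
      obtain ⟨u, hu, hu'⟩ := hsplit (k' + 1 - M i j) (M i j)
      rw [show k' + 1 - M i j + M i j = k' + 1 by omega] at hu'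
      have hbraid := cs.wordProd_braidWord_eq i j
      unfold braidWord at hbraid
      rw [hv, hu', hbraid, M.symmetric j i] at h
      apply h
      unfold IsRightDescent
      obtain ⟨m', hm'⟩ : ∃ m', M i j = m' + 1 := ⟨M i j - 1, by omega⟩
      have h2 : cs.wordProd (alternatingWord j i (M i j)) * cs.simple i =
          cs.wordProd (alternatingWord i j m') := by
        rw [hm', alternatingWord_succ, wordProd_concat, simple_mul_simple_cancel_right]
      rw [mul_assoc, mul_assoc, h2]
      have h3 : cs.length (v * (u * cs.wordProd (alternatingWord j i (M i j)))) = cs.length w := by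
        rw [M.symmetric i j, ← hbraid, ← hu', ← hv]
      rw [h3]
      have h4 := cs.length_mul_le v (u * cs.wordProd (alternatingWord i j m'))
      have h5 := cs.length_mul_le u (cs.wordProd (alternatingWord i j m'))
      have h6 := cs.length_wordProd_le (alternatingWord i j m')
      rw [length_alternatingWord] at h6
      omega
    have hU1 := chebU_nonneg (M i j) (k' + 1) (M.off_diagonal i j hij)
      (fun h => by have := hkm h; omega)
    have hU2 := chebU_nonneg (M i j) (k' + 1 + 1) (M.off_diagonal i j hij) hkm
    have hI := IH _ hvlt v i hvij.1 rfl
    have hJ := IH _ hvlt v j hvij.2 rfl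
    rw [hv, map_mul, Module.End.mul_apply, geom_alt]
    split_ifs
    · rw [map_add, map_smul, map_smul]
      exact add_nonneg (smul_nonneg hU2 hI) (smul_nonneg hU1 hJ)
    · rw [map_add, map_smul, map_smul]
      exact add_nonneg (smul_nonneg hU1 hI) (smul_nonneg hU2 hJ)

theorem geom_neg (M : CoxeterMatrix ι) (w : M.Group) (i : ι)
    (h : M.toCoxeterSystem.IsRightDescent w i) : geom M w (sroot i) ≤ 0 := by
  have h2 := geom_pos M (w * M.simple i) i
    (by rw [← M.toCoxeterSystem_simple];
        exact M.toCoxeterSystem.isRightDescent_iff_not_isRightDescent_mul.mp h)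
  rw [map_mul, Module.End.mul_apply, geom_simple, bRefl_apply, cxForm_self] at h2
  have : sroot i - (2 * 1 : ℝ) • sroot i = -sroot (ι := ι) i := by module
  rw [this, map_neg] at h2
  simpa using h2

theorem exists_geom_neg (M : CoxeterMatrix ι) (w : M.Group) (h : w ≠ 1) :
    ∃ i, geom M w (sroot i) ≤ 0 := by
  obtain ⟨i, hi⟩ := M.toCoxeterSystem.exists_rightDescent_of_ne_one h
  exact ⟨i, geom_neg M w i hi⟩

end Geom

section PingPong

theorem exists_reduced_list {G : Type*} [Group G] (t : ℕ → G) (ht : ∀ n, t n * t n = 1) (N : ℕ)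
    (x : G) (hx : x ∈ Subgroup.closure (t '' Set.Iio N)) :
    ∃ l : List ℕ, (∀ i ∈ l, i < N) ∧ l.IsChain (· ≠ ·) ∧ (l.map t).prod = x := by
  have key : ∀ i, i < N → ∀ y : G,
      (∃ l : List ℕ, (∀ i ∈ l, i < N) ∧ l.IsChain (· ≠ ·) ∧ (l.map t).prod = y) →
      (∃ l : List ℕ, (∀ i ∈ l, i < N) ∧ l.IsChain (· ≠ ·) ∧ (l.map t).prod = t i * y) := by
    rintro i hi y ⟨l, hl, hc, rfl⟩
    cases l with
    | nil => exact ⟨[i], by simpa using hi, by simp, by simp⟩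
    | cons k l =>
      by_cases hik : i = k
      · subst hik
        refine ⟨l, fun j hj => hl j (by simp [hj]), hc.of_cons, ?_⟩
        simp [← mul_assoc, ht]
      · refine ⟨i :: k :: l, ?_, ?_, by simp⟩
        · intro j hj
          rcases List.mem_cons.mp hj with rfl | hj
          · exact hi
          · exact hl j hj
        · exact List.isChain_cons_cons.mpr ⟨hik, hc⟩
  induction hx using Subgroup.closure_induction_left with
  | one => exact ⟨[], by simp, by simp, by simp⟩
  | mul_left x hx y hy ih =>
    obtain ⟨i, hi, rfl⟩ := hx
    exact key i hi _ ih
  | inv_mul_cancel x hx y hy ih =>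
    obtain ⟨i, hi, rfl⟩ := hx
    rw [inv_eq_of_mul_eq_one_left (ht i)]
    exact key i hi _ ih

theorem not_slender_of_pingpong {G V : Type*} [Group G] [AddCommGroup V] [Module ℝ V]
    (ρ : G →* Module.End ℝ V) (B : LinearMap.BilinForm ℝ V)
    (γ : ℕ → V) (t : ℕ → G) (ht : ∀ n, t n * t n = 1) (hρ : ∀ n, ρ (t n) = bRefl B (γ n))
    (h1 : ∀ n, B (γ n) (γ n) = 1) (h2 : ∀ n m, n ≠ m → B (γ n) (γ m) ≤ -1)
    (φ : V →ₗ[ℝ] ℝ) (hφ : ∀ n, 0 < φ (γ n)) : ¬ Group.Slender G := by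
  intro hsl
  obtain ⟨S, hS⟩ := hsl (Subgroup.closure (Set.range t))
  have hmono : ∀ {a b : ℕ}, a ≤ b →
      Subgroup.closure (t '' Set.Iio a) ≤ Subgroup.closure (t '' Set.Iio b) := fun hab =>
    Subgroup.closure_mono (Set.image_mono (Set.Iio_subset_Iio hab))
  have hex : ∀ x ∈ Subgroup.closure (Set.range t), ∃ N, x ∈ Subgroup.closure (t '' Set.Iio N) := by
    intro x hx
    induction hx using Subgroup.closure_induction with
    | mem x hx =>
      obtain ⟨n, rfl⟩ := hx
      exact ⟨n + 1, Subgroup.subset_closure ⟨n, by simp, rfl⟩⟩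
    | one => exact ⟨0, one_mem _⟩
    | mul x y _ _ hx hy =>
      obtain ⟨a, ha⟩ := hx
      obtain ⟨b, hb⟩ := hy
      exact ⟨max a b, mul_mem (hmono (le_max_left _ _) ha) (hmono (le_max_right _ _) hb)⟩
    | inv x _ hx =>
      obtain ⟨a, ha⟩ := hx
      exact ⟨a, inv_mem ha⟩
  have hfin : ∃ N, ∀ x ∈ S, x ∈ Subgroup.closure (t '' Set.Iio N) := by
    have : ∀ x : S, ∃ N, (x : G) ∈ Subgroup.closure (t '' Set.Iio N) := fun x =>
      hex x (hS ▸ Subgroup.subset_closure x.2)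
    choose f hf using this
    refine ⟨Finset.univ.sup f, fun x hx => hmono ?_ (hf ⟨x, hx⟩)⟩
    exact Finset.le_sup (f := f) (Finset.mem_univ _)
  obtain ⟨N, hN⟩ := hfin
  have hmem : t N ∈ Subgroup.closure (t '' Set.Iio N) := by
    have h3 : t N ∈ Subgroup.closure (Set.range t) := Subgroup.subset_closure ⟨N, rfl⟩
    rw [← hS] at h3
    exact (Subgroup.closure_le _).mpr hN h3
  obtain ⟨l, hl, hc, hp⟩ := exists_reduced_list t ht N _ hmem
  have key : ∀ l : List ℕ, (∀ i ∈ l, i < N) → l.IsChain (· ≠ ·) →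
      φ (γ N) ≤ φ (ρ (l.map t).prod (γ N)) ∧
      (∀ j, j < N → l.head? ≠ some j → B (γ j) (ρ (l.map t).prod (γ N)) ≤ 0) ∧
      (∀ i, l.head? = some i → 0 ≤ B (γ i) (ρ (l.map t).prod (γ N)) ∧
        ∀ j, j < N → j ≠ i →
          B (γ j) (ρ (l.map t).prod (γ N)) ≤ - B (γ i) (ρ (l.map t).prod (γ N))) := by
    intro l
    induction l with
    | nil =>
      intro _ _
      refine ⟨by simp, ?_, by simp⟩
      intro j hj _
      have := h2 j N hj.ne
      simp
      linarith
    | cons i l ih =>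
      intro hl hc
      obtain ⟨ih1, ih2, ih3⟩ := ih (fun j hj => hl j (by simp [hj])) hc.of_cons
      have hi : i < N := hl i (by simp)
      have hne : l.head? ≠ some i := by
        intro h
        cases l with
        | nil => simp at h
        | cons k l =>
          simp at h
          exact (List.isChain_cons_cons.mp hc).1 h.symm
      simp only [List.map_cons, List.prod_cons, map_mul, Module.End.mul_apply, hρ, bRefl_apply,
        map_sub, map_smul, smul_eq_mul, h1, List.head?_cons]
      set x := ρ (l.map t).prod (γ N) with hx
      have hb := ih2 i hi hne
      have hstep : ∀ j, j < N → j ≠ i → B (γ j) x - 2 * B (γ i) x * B (γ j) (γ i) ≤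
          B (γ i) x := by
        intro j hj hji
        have h3 := h2 j i hji
        have h4 : B (γ j) x ≤ - B (γ i) x := by
          by_cases hlj : l.head? = some j
          · have := (ih3 j hlj).2 i hi (Ne.symm hji)
            linarith
          · have := ih2 j hj hlj
            linarith
        nlinarith
      refine ⟨?_, ?_, ?_⟩
      · have := hφ i
        nlinarith
      · intro j hj hji
        have hji' : j ≠ i := fun h => hji (by rw [h])
        have := hstep j hj hji'
        linarith
      · rintro i' hi'
        simp only [Option.some.injEq] at hi'
        subst hi'
        refine ⟨?_, ?_⟩
        · rw [h1]; linarith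
        · intro j hj hji
          have := hstep j hj hji
          rw [h1]
          linarith
  have := (key l hl hc).1
  rw [hp, hρ, bRefl_apply, h1] at this
  have h4 : γ N - (2 * 1 : ℝ) • γ N = -γ N := by module
  rw [h4, map_neg] at this
  have := hφ N
  linarith

end PingPong

section Hyp

variable {G V : Type*} [Group G] [AddCommGroup V] [Module ℝ V]

/-- The vector `z` is the root of a reflection in the image of `G`. -/
def Realized (ρ : G →* Module.End ℝ V) (B : LinearMap.BilinForm ℝ V) (z : V) : Prop :=
  ∃ t : G, t * t = 1 ∧ ρ t = bRefl B z

theorem rho_inv_apply (ρ : G →* Module.End ℝ V) (g : G) (x : V) : ρ g (ρ g⁻¹ x) = x := by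
  rw [← Module.End.mul_apply, ← map_mul]
  simp

theorem Realized.map {ρ : G →* Module.End ℝ V} {B : LinearMap.BilinForm ℝ V}
    (hB : ∀ g x y, B (ρ g x) (ρ g y) = B x y) {z : V} (h : Realized ρ B z) (g : G) :
    Realized ρ B (ρ g z) := by
  obtain ⟨t, ht, hr⟩ := h
  refine ⟨g * t * g⁻¹, ?_, ?_⟩
  · have : g * t * g⁻¹ * (g * t * g⁻¹) = g * (t * t) * g⁻¹ := by group
    rw [this, ht]
    simp
  · refine LinearMap.ext fun x => ?_
    rw [map_mul, map_mul, Module.End.mul_apply, Module.End.mul_apply, hr, bRefl_apply, bRefl_apply,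
      map_sub, map_smul, rho_inv_apply]
    have : B z (ρ g⁻¹ x) = B (ρ g z) x := by
      rw [← hB g, rho_inv_apply]
    rw [this]

theorem Realized.refl {ρ : G →* Module.End ℝ V} {B : LinearMap.BilinForm ℝ V}
    (hB : ∀ g x y, B (ρ g x) (ρ g y) = B x y) {z z' : V} (h : Realized ρ B z)
    (h' : Realized ρ B z') : Realized ρ B (bRefl B z z') := by
  obtain ⟨t, ht, hr⟩ := h
  rw [← hr]
  exact h'.map hB t

theorem rho_pow_apply {ρ : G →* Module.End ℝ V} {g : G} {e₁ e₂ q : V} {L : ℝ}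
    (h1 : ρ g e₁ = L • e₁) (h2 : ρ g e₂ = L⁻¹ • e₂) (hq : ρ g q = q) (x y : ℝ) (n : ℕ) :
    ρ (g ^ n) (x • e₁ + y • e₂ + q) = (x * L ^ n) • e₁ + (y * (L ^ n)⁻¹) • e₂ + q := by
  induction n with
  | zero => simp
  | succ n ih =>
    rw [pow_succ', map_mul, Module.End.mul_apply, ih, map_add, map_add, map_smul, map_smul, h1, h2,
      hq, smul_smul, smul_smul]
    congr 3
    · ring
    · rw [pow_succ, mul_inv]; ring

theorem not_slender_level3 (ρ : G →* Module.End ℝ V) (B : LinearMap.BilinForm ℝ V)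
    (hB : ∀ g x y, B (ρ g x) (ρ g y) = B x y) (hs : ∀ x y, B x y = B y x)
    (e₁ e₂ q : V) (L E X Y : ℝ) (hL : 1 < L) (hE : E < 0) (g : G)
    (h11 : B e₁ e₁ = 0) (h22 : B e₂ e₂ = 0) (h12 : B e₁ e₂ = E)
    (h1q : B e₁ q = 0) (h2q : B e₂ q = 0)
    (h1 : ρ g e₁ = L • e₁) (h2 : ρ g e₂ = L⁻¹ • e₂) (hq : ρ g q = q)
    (hXY : 0 < X * Y) (hR : Realized ρ B (X • e₁ + Y • e₂ + q))
    (hn : B (X • e₁ + Y • e₂ + q) (X • e₁ + Y • e₂ + q) = 1) : ¬ Group.Slender G := by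
  have h21 : B e₂ e₁ = E := by rw [hs, h12]
  have hq1 : B q e₁ = 0 := by rw [hs, h1q]
  have hq2 : B q e₂ = 0 := by rw [hs, h2q]
  set Q := B q q with hQ
  have hcalc : ∀ a b c d : ℝ, B (a • e₁ + b • e₂ + q) (c • e₁ + d • e₂ + q) =
      (a * d + b * c) * E + Q := by
    intro a b c d
    simp only [map_add, map_smul, LinearMap.add_apply, LinearMap.smul_apply, smul_eq_mul,
      h11, h22, h12, h21, h1q, h2q, hq1, hq2, ← hQ]
    ring
  obtain ⟨k, hk⟩ := pow_unbounded_of_one_lt ((Q + 1) / (X * Y * (-E))) hL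
  have hpos : 0 < X * Y * (-E) := mul_pos hXY (by linarith)
  have hk1 : Q + 1 ≤ L ^ (k + 1) * (X * Y * (-E)) := by
    rw [div_lt_iff₀ hpos] at hk
    have : L ^ k ≤ L ^ (k + 1) := pow_le_pow_right₀ hL.le (by omega)
    nlinarith
  set A := L ^ (k + 1) with hA
  have hA1 : 1 < A := one_lt_pow₀ hL (by omega)
  have hg : ∀ n, ρ ((g ^ (k + 1)) ^ n) (X • e₁ + Y • e₂ + q) =
      (X * A ^ n) • e₁ + (Y * (A ^ n)⁻¹) • e₂ + q := by
    intro n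
    rw [← pow_mul, rho_pow_apply h1 h2 hq, hA, ← pow_mul]
  have hreal : ∀ n, Realized ρ B ((X * A ^ n) • e₁ + (Y * (A ^ n)⁻¹) • e₂ + q) := by
    intro n
    rw [← hg]
    exact hR.map hB _
  choose t ht1 ht2 using hreal
  have hlt : ∀ n m : ℕ, n < m → A ≤ A ^ n * (A ^ m)⁻¹ + (A ^ n)⁻¹ * A ^ m := by
    intro n m hnm
    obtain ⟨r, rfl⟩ : ∃ r, m = n + (r + 1) := ⟨m - n - 1, by omega⟩
    have hAn : (0 : ℝ) < A ^ n := by positivity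
    have e : (A ^ n)⁻¹ * A ^ (n + (r + 1)) = A ^ (r + 1) := by
      rw [pow_add]; field_simp
    rw [e]
    have h3 : A ≤ A ^ (r + 1) := le_self_pow₀ hA1.le (by omega)
    have : 0 < A ^ n * (A ^ (n + (r + 1)))⁻¹ := by positivity
    linarith
  have hX : X ≠ 0 := by rintro rfl; simp at hXY
  have hY : Y ≠ 0 := by rintro rfl; simp at hXY
  refine not_slender_of_pingpong ρ B (fun n => (X * A ^ n) • e₁ + (Y * (A ^ n)⁻¹) • e₂ + q) t
    ht1 ht2 ?_ ?_ ((-Y) • B e₁) ?_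
  · intro n
    rw [hcalc] at hn ⊢
    rw [← hn]
    have : A ^ n ≠ 0 := by positivity
    field_simp
  · intro n m hnm
    simp only [hcalc]
    have h3 : A ≤ A ^ n * (A ^ m)⁻¹ + (A ^ n)⁻¹ * A ^ m := by
      rcases lt_or_gt_of_ne hnm with h | h
      · exact hlt n m h
      · have := hlt m n h
        linarith
    have e : X * A ^ n * (Y * (A ^ m)⁻¹) + Y * (A ^ n)⁻¹ * (X * A ^ m) =
      X * Y * (A ^ n * (A ^ m)⁻¹ + (A ^ n)⁻¹ * A ^ m) := by ring
    rw [e]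
    nlinarith
  · intro n
    have : B e₁ ((X * A ^ n) • e₁ + (Y * (A ^ n)⁻¹) • e₂ + q) = (Y * (A ^ n)⁻¹) * E := by
      simp only [map_add, map_smul, smul_eq_mul, h11, h12, h1q]
      ring
    rw [LinearMap.smul_apply, this, smul_eq_mul]
    have h3 : 0 < (A ^ n)⁻¹ := by positivity
    have h4 : 0 < Y ^ 2 * (A ^ n)⁻¹ * (-E) := by
      have : 0 < Y ^ 2 := by positivity
      have : 0 < -E := by linarith
      positivity
    nlinarith

theorem level2_T_ge {x y N I E Q T : ℝ} (hT : T = -((x * N) ^ 2 + (y * I) ^ 2) * E - Q)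
    (hE : E < 0) (hN : 1 ≤ N) : (-E) * x ^ 2 * N - Q ≤ T := by
  have h1 : 0 ≤ (y * I) ^ 2 * (-E) := mul_nonneg (sq_nonneg _) (by linarith)
  have h5 : x ^ 2 * N ≤ (x * N) ^ 2 := by
    have : (x * N) ^ 2 = (x ^ 2 * N) * N := by ring
    rw [this]
    exact le_mul_of_one_le_right (by positivity) hN
  have h6 : (-E) * (x ^ 2 * N) ≤ (-E) * (x * N) ^ 2 :=
    mul_le_mul_of_nonneg_left h5 (by linarith)
  rw [hT]
  linarith

theorem level2_p1 {x y N I E Q T : ℝ} (hT : T = -((x * N) ^ 2 + (y * I) ^ 2) * E - Q)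
    (hE : E < 0) (hN : 1 ≤ N) (hI0 : 0 < I) (hI : I ≤ 1)
    (hn2 : |x * y| + Q * 2 * x ^ 2 + 1 ≤ 2 * x ^ 2 * (-E) * x ^ 2 * N) :
    0 < x * (y * I + 2 * T * (x * N)) := by
  have hge := level2_T_ge hT hE hN
  have hxy1 := neg_abs_le (x * y)
  have hxy0 := abs_nonneg (x * y)
  have h6 : 2 * x ^ 2 * ((-E) * x ^ 2 * N - Q) ≤ 2 * x ^ 2 * T :=
    mul_le_mul_of_nonneg_left hge (by positivity)
  have h7 : |x * y| + 1 ≤ 2 * x ^ 2 * T := by linarith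
  have h8 : -|x * y| ≤ (x * y) * I := by
    have h1 : -|x * y| * I ≤ (x * y) * I := mul_le_mul_of_nonneg_right hxy1 hI0.le
    have h2 : |x * y| * I ≤ |x * y| := mul_le_of_le_one_right hxy0 hI
    linarith
  have h9 : 2 * x ^ 2 * T ≤ 2 * x ^ 2 * T * N := le_mul_of_one_le_right (by linarith) hN
  have e : x * (y * I + 2 * T * (x * N)) = (x * y) * I + 2 * x ^ 2 * T * N := by ring
  rw [e]
  linarith

theorem level2_p2 {x y N I E Q T : ℝ} (hT : T = -((x * N) ^ 2 + (y * I) ^ 2) * E - Q)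
    (hE : E < 0) (hNi0 : 0 < I) (hNi : I ≤ 1) (hNN : N * I = 1) (hQ : 0 < Q)
    (hQe : Q = 1 - 2 * x * y * E)
    (hn3 : 2 * |x * y| * Q + 2 * |x * y| * (-E) * y ^ 2 + 1 ≤ x ^ 2 * Q * N) :
    0 < x * (x * N + 2 * T * (y * I)) := by
  have e : x * (x * N + 2 * T * (y * I)) =
      x ^ 2 * Q * N + 2 * ((x * y) * ((-E) * y ^ 2 * I ^ 3)) - 2 * ((x * y) * (Q * I)) := by
    have e1 : 2 * (-((x * N) ^ 2 + (y * I) ^ 2) * E - Q) * (y * I) =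
      -2 * x ^ 2 * y * E * N * (N * I) + 2 * y * ((-E) * y ^ 2 * I ^ 3) - 2 * y * Q * I := by ring
    rw [hT, e1, hNN]
    linear_combination (-x ^ 2 * N) * hQe
  rw [e]
  have hxy1 := neg_abs_le (x * y)
  have hxy2 := le_abs_self (x * y)
  have hxy0 := abs_nonneg (x * y)
  have hI3 : I ^ 3 ≤ 1 := pow_le_one₀ hNi0.le hNi
  have hI30 : 0 ≤ I ^ 3 := by positivity
  have hEy : 0 ≤ (-E) * y ^ 2 := mul_nonneg (by linarith) (sq_nonneg _)
  have a1 : -(|x * y| * ((-E) * y ^ 2)) ≤ (x * y) * ((-E) * y ^ 2 * I ^ 3) := by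
    have h1 : (-E) * y ^ 2 * I ^ 3 ≤ (-E) * y ^ 2 := mul_le_of_le_one_right hEy hI3
    have h2 : 0 ≤ (-E) * y ^ 2 * I ^ 3 := mul_nonneg hEy hI30
    have h3 := mul_le_mul_of_nonneg_right hxy1 h2
    have h4 := mul_le_mul_of_nonneg_left h1 hxy0
    linarith
  have a2 : (x * y) * (Q * I) ≤ |x * y| * Q := by
    have h1 : Q * I ≤ Q := mul_le_of_le_one_right hQ.le hNi
    have h2 : 0 ≤ Q * I := by positivity
    exact (mul_le_mul_of_nonneg_right hxy2 h2).trans (mul_le_mul_of_nonneg_left h1 hxy0)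
  linarith

set_option maxHeartbeats 1000000 in
theorem not_slender_level2 (ρ : G →* Module.End ℝ V) (B : LinearMap.BilinForm ℝ V)
    (hB : ∀ g x y, B (ρ g x) (ρ g y) = B x y) (hs : ∀ x y, B x y = B y x)
    (e₁ e₂ q : V) (L E x y : ℝ) (hL : 1 < L) (hE : E < 0) (g h : G)
    (h11 : B e₁ e₁ = 0) (h22 : B e₂ e₂ = 0) (h12 : B e₁ e₂ = E)
    (h1q : B e₁ q = 0) (h2q : B e₂ q = 0) (hQ : 0 < B q q)
    (h1 : ρ g e₁ = L • e₁) (h2 : ρ g e₂ = L⁻¹ • e₂) (hq : ρ g q = q)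
    (hh1 : ρ h e₁ = e₂) (hh2 : ρ h e₂ = e₁) (hhq : ρ h q = q)
    (hx : x ≠ 0) (hR : Realized ρ B (x • e₁ + y • e₂ + q))
    (hn : B (x • e₁ + y • e₂ + q) (x • e₁ + y • e₂ + q) = 1) : ¬ Group.Slender G := by
  have h21 : B e₂ e₁ = E := by rw [hs, h12]
  have hq1 : B q e₁ = 0 := by rw [hs, h1q]
  have hq2 : B q e₂ = 0 := by rw [hs, h2q]
  set Q := B q q with hQdef
  have hcalc : ∀ a b c d : ℝ, B (a • e₁ + b • e₂ + q) (c • e₁ + d • e₂ + q) =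
      (a * d + b * c) * E + Q := by
    intro a b c d
    simp only [map_add, map_smul, LinearMap.add_apply, LinearMap.smul_apply, smul_eq_mul,
      h11, h22, h12, h21, h1q, h2q, hq1, hq2, ← hQdef]
    ring
  have hQe : Q = 1 - 2 * x * y * E := by
    rw [hcalc] at hn
    linarith
  -- asymptotics
  have hx2 : 0 < x ^ 2 := by positivity
  have hLt : Filter.Tendsto (fun n : ℕ => L ^ n) Filter.atTop Filter.atTop :=
    tendsto_pow_atTop_atTop_of_one_lt hL
  obtain ⟨n, hn1, hn2, hn3⟩ : ∃ n : ℕ, 1 ≤ L ^ n ∧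
      |x * y| + Q * 2 * x ^ 2 + 1 ≤ 2 * x ^ 2 * (-E) * x ^ 2 * L ^ n ∧
      2 * |x * y| * Q + 2 * |x * y| * (-E) * y ^ 2 + 1 ≤ x ^ 2 * Q * L ^ n := by
    have c1 : 0 < 2 * x ^ 2 * (-E) * x ^ 2 := by
      have : 0 < -E := by linarith
      positivity
    have c2 : 0 < x ^ 2 * Q := by positivity
    have t1 := (hLt.const_mul_atTop c1).eventually_ge_atTop (|x * y| + Q * 2 * x ^ 2 + 1)
    have t2 := (hLt.const_mul_atTop c2).eventually_ge_atTop
      (2 * |x * y| * Q + 2 * |x * y| * (-E) * y ^ 2 + 1)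
    obtain ⟨n, h1, h2⟩ := (t1.and t2).exists
    exact ⟨n, one_le_pow₀ hL.le, h1, h2⟩
  set N := L ^ n with hN
  have hN0 : 0 < N := by linarith
  have hNi : N⁻¹ ≤ 1 := inv_le_one_of_one_le₀ hn1
  have hNi0 : 0 < N⁻¹ := by positivity
  have hNN : N * N⁻¹ = 1 := mul_inv_cancel₀ hN0.ne'
  set I := N⁻¹ with hI
  have hR1 : Realized ρ B ((x * N) • e₁ + (y * I) • e₂ + q) := by
    have := hR.map hB (g ^ n)
    rwa [rho_pow_apply h1 h2 hq] at this
  have hR2 : Realized ρ B ((y * I) • e₁ + (x * N) • e₂ + q) := by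
    have := hR1.map hB h
    rw [map_add, map_add, map_smul, map_smul, hh1, hh2, hhq] at this
    rwa [add_comm ((y * I) • e₁)]
  set T := -((x * N) ^ 2 + (y * I) ^ 2) * E - Q with hT
  have hb : B ((x * N) • e₁ + (y * I) • e₂ + q) ((y * I) • e₁ + (x * N) • e₂ + q) = -T := by
    rw [hcalc, hT]; ring
  have hR3 := hR1.refl hB hR2
  have hT0 : 0 < 1 + 2 * T := by
    have hge := level2_T_ge hT hE hn1
    have : 0 < 2 * x ^ 2 * ((-E) * x ^ 2 * N - Q) := by
      have := abs_nonneg (x * y)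
      nlinarith
    have h6 : 0 < ((-E) * x ^ 2 * N - Q) := by
      by_contra hcon
      push Not at hcon
      nlinarith
    linarith
  have hδ : bRefl B ((x * N) • e₁ + (y * I) • e₂ + q) ((y * I) • e₁ + (x * N) • e₂ + q) =
      (y * I + 2 * T * (x * N)) • e₁ + (x * N + 2 * T * (y * I)) • e₂ + (1 + 2 * T) • q := by
    rw [bRefl_apply, hb]
    module
  have hnorm : B (bRefl B ((x * N) • e₁ + (y * I) • e₂ + q) ((y * I) • e₁ + (x * N) • e₂ + q))
      (bRefl B ((x * N) • e₁ + (y * I) • e₂ + q) ((y * I) • e₁ + (x * N) • e₂ + q)) = 1 := by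
    rw [bRefl_preserves B hs]
    · rw [hcalc]
      have : (y * I * (x * N) + x * N * (y * I)) = 2 * x * y * (N * I) := by ring
      rw [this, hNN, hQe]; ring
    · rw [hcalc]
      have : (x * N * (y * I) + y * I * (x * N)) = 2 * x * y * (N * I) := by ring
      rw [this, hNN, hQe]; ring
  rw [hδ] at hR3 hnorm
  refine not_slender_level3 ρ B hB hs e₁ e₂ ((1 + 2 * T) • q) L E _ _ hL hE g h11 h22 h12
    (by simp [h1q]) (by simp [h2q]) h1 h2 (by rw [map_smul, hq]) ?_ hR3 hnorm
  -- positivity of the product of the coordinates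
  have p1 := level2_p1 hT hE hn1 hNi0 hNi hn2
  have p2 := level2_p2 hT hE hNi0 hNi hNN hQ hQe hn3
  have := mul_pos p1 p2
  have e : x * (y * I + 2 * T * (x * N)) * (x * (x * N + 2 * T * (y * I))) =
    x ^ 2 * ((y * I + 2 * T * (x * N)) * (x * N + 2 * T * (y * I))) := by ring
  rw [e] at this
  exact (pos_iff_pos_of_mul_pos this).mp hx2

set_option maxHeartbeats 1000000 in
theorem not_slender_of_triple (ρ : G →* Module.End ℝ V) (B : LinearMap.BilinForm ℝ V)
    (hB : ∀ g x y, B (ρ g x) (ρ g y) = B x y) (hs : ∀ x y, B x y = B y x)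
    (α β γ : V) (c : ℝ) (hc : 1 < c)
    (hα : B α α = 1) (hβ : B β β = 1) (hγ : B γ γ = 1) (hαβ : B α β = -c)
    (Rα : Realized ρ B α) (Rβ : Realized ρ B β) (Rγ : Realized ρ B γ)
    (ha : |B γ α| ≤ 1) (hne : B γ β + c * B γ α ≠ 0) : ¬ Group.Slender G := by
  obtain ⟨ra, -, hra⟩ := Rα
  obtain ⟨rb, -, hrb⟩ := Rβ
  have hβα : B β α = -c := by rw [hs, hαβ]
  obtain ⟨u, hu1, hu⟩ : ∃ u : ℝ, 1 < u ∧ u ^ 2 - 2 * c * u + 1 = 0 := by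
    refine ⟨c + Real.sqrt (c ^ 2 - 1), ?_, ?_⟩
    · have := Real.sqrt_nonneg (c ^ 2 - 1)
      linarith
    · have := Real.sq_sqrt (show 0 ≤ c ^ 2 - 1 by nlinarith)
      linear_combination this
  have hu0 : 0 < u := by linarith
  set v := u⁻¹ with hv
  have huv : u * v = 1 := mul_inv_cancel₀ hu0.ne'
  have hc2 : 2 * c = u + v := by
    have : 2 * c * (u * v) = u * (u * v) + v := by linear_combination (-v) * hu
    rw [huv] at this; linarith
  have hvv : v ^ 2 - 2 * c * v + 1 = 0 := by rw [hc2]; linear_combination (-1 : ℝ) * huv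
  set e₁ := α + u • β with he1
  set e₂ := α + v • β with he2
  set E : ℝ := 2 - 2 * c ^ 2 with hE
  have hE0 : E < 0 := by rw [hE]; nlinarith
  have h11 : B e₁ e₁ = 0 := by
    simp only [he1, map_add, map_smul, LinearMap.add_apply, LinearMap.smul_apply, smul_eq_mul,
      hα, hβ, hαβ, hβα]
    linear_combination hu
  have h22 : B e₂ e₂ = 0 := by
    simp only [he2, map_add, map_smul, LinearMap.add_apply, LinearMap.smul_apply, smul_eq_mul,
      hα, hβ, hαβ, hβα]
    linear_combination hvv
  have h12 : B e₁ e₂ = E := by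
    simp only [he1, he2, map_add, map_smul, LinearMap.add_apply, LinearMap.smul_apply, smul_eq_mul,
      hα, hβ, hαβ, hβα, hE]
    linear_combination huv + c * hc2
  have h21 : B e₂ e₁ = E := by rw [hs, h12]
  set a := B γ α with hadef
  set b := B γ β with hbdef
  have hαγ : B α γ = a := hs _ _
  have hβγ : B β γ = b := hs _ _
  set y := (a + u * b) / E with hy
  set x := (a + v * b) / E with hx
  have hyE : y * E = a + u * b := by exact div_mul_cancel₀ _ hE0.ne
  have hxE : x * E = a + v * b := by exact div_mul_cancel₀ _ hE0.ne
  set q := γ - x • e₁ - y • e₂ with hq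
  have h1γ : B e₁ γ = a + u * b := by
    simp [he1, hαγ, hβγ]
  have h2γ : B e₂ γ = a + v * b := by
    simp [he2, hαγ, hβγ]
  have h1q : B e₁ q = 0 := by
    simp only [hq, map_sub, map_smul, smul_eq_mul, h11, h12, h1γ]
    linarith
  have h2q : B e₂ q = 0 := by
    simp only [hq, map_sub, map_smul, smul_eq_mul, h21, h22, h2γ]
    linarith
  have huv' : u - v ≠ 0 := by
    have : v < 1 := by
      by_contra hcon
      push Not at hcon
      nlinarith
    linarith
  have hβq : B β q = 0 := by
    have : B (e₁ - e₂) q = (u - v) * B β q := by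
      simp only [he1, he2, map_add, map_sub, map_smul, LinearMap.add_apply, LinearMap.sub_apply,
        LinearMap.smul_apply, smul_eq_mul]
      ring
    have h0 : B (e₁ - e₂) q = 0 := by
      rw [map_sub B e₁ e₂, LinearMap.sub_apply, h1q, h2q, sub_zero]
    rw [h0] at this
    exact (mul_eq_zero.mp this.symm).resolve_left huv'
  have hαq : B α q = 0 := by
    have h := h1q
    rw [he1] at h
    simpa [hβq] using h
  have hγq : γ = x • e₁ + y • e₂ + q := by rw [hq]; abel
  have hγ1 : B γ e₁ = y * E := by rw [hs, h1γ, hyE]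
  have hγ2 : B γ e₂ = x * E := by rw [hs, h2γ, hxE]
  have hγQ : B γ q = 1 - x * (y * E) - y * (x * E) := by
    rw [hq]
    simp only [map_sub, map_smul, hγ, hγ1, hγ2, smul_eq_mul]
  clear_value q x y e₁ e₂ a b v
  have hqq : 0 < B q q := by
    have h3 : B q q = 1 - 2 * x * y * E := by
      have : B γ q = B q q := by
        conv_lhs => rw [hγq]
        simp [h1q, h2q]
      rw [← this, hγQ]
      ring
    rw [h3]
    have h4 : (1 - 2 * x * y * E) * (-E) = 2 * ((b + c * a) ^ 2 + (c ^ 2 - 1) * (1 - a ^ 2)) := by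
      have : (1 - 2 * x * y * E) * (-E) = -E + 2 * (x * E) * (y * E) := by ring
      rw [this, hxE, hyE, hE]
      linear_combination (2 * b ^ 2) * huv - 2 * a * b * hc2
    have h5 : a ^ 2 ≤ 1 := by
      rw [← sq_abs]
      have := abs_nonneg a
      nlinarith
    have h6 : 0 < (b + c * a) ^ 2 := by positivity
    have h7 : 0 < (1 - 2 * x * y * E) * (-E) := by
      rw [h4]
      have : 0 ≤ (c ^ 2 - 1) * (1 - a ^ 2) := mul_nonneg (by nlinarith) (by linarith)
      linarith
    exact (pos_iff_pos_of_mul_pos h7).mpr (by linarith)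
  -- actions
  have sα1 : ρ ra e₁ = u ^ 2 • e₂ := by
    rw [hra, bRefl_apply]
    have : B α e₁ = 1 - c * u := by simp [he1, hα, hαβ]; ring
    rw [this, he1, he2]
    have hw : u ^ 2 * v = u := by linear_combination u * huv
    rw [smul_add, smul_smul, hw]
    have : (2 * (1 - c * u)) = 1 - u ^ 2 := by linear_combination hu
    rw [this]
    module
  have sα2 : ρ ra e₂ = (u ^ 2)⁻¹ • e₁ := by
    have h3 : ρ ra (ρ ra e₂) = e₂ := by
      rw [hra, bRefl_apply, bRefl_apply]
      simp only [map_sub, map_smul, smul_eq_mul, hα]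
      module
    have h4 : (u ^ 2 : ℝ) ≠ 0 := by positivity
    have h5 : ρ ra (ρ ra e₁) = e₁ := by
      rw [hra, bRefl_apply, bRefl_apply]
      simp only [map_sub, map_smul, smul_eq_mul, hα]
      module
    rw [sα1, map_smul] at h5
    rw [← h5, smul_smul, inv_mul_cancel₀ h4, one_smul]
  have sβ1 : ρ rb e₁ = e₂ := by
    rw [hrb, bRefl_apply]
    have : B β e₁ = u - c := by simp [he1, hβ, hβα]; ring
    rw [this, he1, he2]
    have : 2 * (u - c) = u - v := by linarith
    rw [this]
    module
  have sβ2 : ρ rb e₂ = e₁ := by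
    rw [hrb, bRefl_apply]
    have : B β e₂ = v - c := by simp [he2, hβ, hβα]; ring
    rw [this, he1, he2]
    have : 2 * (v - c) = v - u := by linarith
    rw [this]
    module
  have sαq : ρ ra q = q := by rw [hra, bRefl_apply, hαq]; simp
  have sβq : ρ rb q = q := by rw [hrb, bRefl_apply, hβq]; simp
  have hL : 1 < u ^ 2 := by nlinarith
  have g1 : ρ (rb * ra) e₁ = u ^ 2 • e₁ := by
    rw [map_mul, Module.End.mul_apply, sα1, map_smul, sβ2]
  have g2 : ρ (rb * ra) e₂ = (u ^ 2)⁻¹ • e₂ := by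
    rw [map_mul, Module.End.mul_apply, sα2, map_smul, sβ1]
  have gq : ρ (rb * ra) q = q := by
    rw [map_mul, Module.End.mul_apply, sαq, sβq]
  by_cases hx0 : x = 0
  · have hy0 : y ≠ 0 := by
      intro hy0
      rw [hx0, zero_mul] at hxE
      rw [hy0, zero_mul] at hyE
      have hb0 : b = 0 := by
        have : (u - v) * b = 0 := by linarith
        exact (mul_eq_zero.mp this).resolve_left huv'
      have ha0 : a = 0 := by rw [hb0] at hxE; linarith
      apply hne
      rw [ha0, hb0]; ring
    have e : ρ rb γ = y • e₁ + x • e₂ + q := by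
      rw [hγq, map_add, map_add, map_smul, map_smul, sβ1, sβ2, sβq, add_comm (x • e₂)]
    have R' := Rγ.map hB rb
    have n' := hB rb γ γ
    rw [hγ] at n'
    rw [e] at R' n'
    exact not_slender_level2 ρ B hB hs e₁ e₂ q (u ^ 2) E y x hL hE0 (rb * ra) rb h11 h22 h12
      h1q h2q hqq g1 g2 gq sβ1 sβ2 sβq hy0 R' n'
  · rw [hγq] at Rγ hγ
    exact not_slender_level2 ρ B hB hs e₁ e₂ q (u ^ 2) E x y hL hE0 (rb * ra) rb h11 h22 h12
      h1q h2q hqq g1 g2 gq sβ1 sβ2 sβq hx0 Rγ hγ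

end Hyp

section Indef

variable {ι : Type*} [Fintype ι] [DecidableEq ι]

theorem cxForm_right_sum (M : CoxeterMatrix ι) (x y : ι → ℝ) :
    cxForm M x y = ∑ i, y i * cxForm M x (sroot i) := by
  conv_lhs => rw [eq_sum_sroot y]
  simp only [map_sum, map_smul, smul_eq_mul]

theorem cxForm_left_sum (M : CoxeterMatrix ι) (x y : ι → ℝ) :
    cxForm M x y = ∑ i, x i * cxForm M (sroot i) y := by
  rw [cxForm_symm, cxForm_right_sum]
  simp only [cxForm_symm M y]

theorem geom_le_of_dominant (M : CoxeterMatrix ι) (v : ι → ℝ)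
    (hv : ∀ i, cxForm M (sroot i) v ≤ 0) (w : M.Group) : v ≤ geom M w v := by
  set cs := M.toCoxeterSystem with hcs
  induction hn : cs.length w using Nat.strong_induction_on generalizing w with
  | _ n IH =>
    by_cases hw : w = 1
    · subst hw
      simp
    obtain ⟨j, hj⟩ := cs.exists_rightDescent_of_ne_one hw
    have h1 := IH _ (by rw [← hn]; exact hj) (w * cs.simple j) rfl
    have h2 := geom_pos M (w * cs.simple j) j (cs.isRightDescent_iff_not_isRightDescent_mul.mp hj)
    have e : w = (w * cs.simple j) * cs.simple j := by simp
    rw [e, map_mul, Module.End.mul_apply]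
    have hsim : geom M (cs.simple j) = bRefl (cxForm M) (sroot j) := by
      rw [hcs, M.toCoxeterSystem_simple, geom_simple]
    rw [hsim, bRefl_apply, map_sub, map_smul]
    have h3 : 0 ≤ (-(2 * cxForm M (sroot j) v)) • geom M (w * cs.simple j) (sroot j) :=
      smul_nonneg (by linarith [hv j]) h2
    rw [neg_smul] at h3
    calc v ≤ _ := h1
      _ ≤ _ := by
        rw [sub_eq_add_neg]
        exact le_add_of_nonneg_right h3

theorem exists_large_of_indef [Nonempty ι] (M : CoxeterMatrix ι) (v : ι → ℝ) (μ : ℝ) (hμ : 0 < μ)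
    (hv : ∀ i, 0 < v i) (he : ∀ i, cxForm M (sroot i) v = -μ * v i) :
    ∃ i w j, 1 < |cxForm M (sroot i) (geom M w (sroot j))| := by
  by_contra hcon
  push Not at hcon
  have hdom : ∀ w, v ≤ geom M w v := geom_le_of_dominant M v fun i => by
    rw [he]; nlinarith [hv i]
  have hnn : ∀ w i, 0 ≤ geom M w v i := fun w i => (hv i).le.trans (hdom w i)
  set F : M.Group → ℝ := fun w => -cxForm M v (geom M w v) with hF
  set C : ℝ := (∑ i, v i) * ∑ i, v i with hC
  have hFC : ∀ w, F w ≤ C := by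
    intro w
    have e : F w = ∑ i, v i * ∑ j, v j * -cxForm M (sroot i) (geom M w (sroot j)) := by
      rw [hF]
      simp only
      rw [cxForm_left_sum, ← Finset.sum_neg_distrib]
      refine Finset.sum_congr rfl fun i _ => ?_
      rw [← mul_neg]
      congr 1
      conv_lhs => rw [eq_sum_sroot v]
      simp [map_sum, Finset.sum_neg_distrib]
    rw [e, hC, Finset.sum_mul]
    refine Finset.sum_le_sum fun i _ => ?_
    refine mul_le_mul_of_nonneg_left ?_ (hv i).le
    refine Finset.sum_le_sum fun j _ => ?_
    have := (abs_le.mp (hcon i w j)).1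
    exact mul_le_of_le_one_right (hv j).le (by linarith)
  have hFφ : ∀ w, F w = μ * ∑ i, v i * geom M w v i := by
    intro w
    rw [hF]
    simp only
    rw [cxForm_right_sum, ← Finset.sum_neg_distrib, Finset.mul_sum]
    refine Finset.sum_congr rfl fun i _ => ?_
    rw [cxForm_symm, he]
    ring
  have hFs : ∀ w i, F (M.simple i * w) = F w - 2 * μ * v i * cxForm M (sroot i) (geom M w v) := by
    intro w i
    rw [hF]
    simp only
    rw [map_mul, Module.End.mul_apply, geom_simple, bRefl_apply, map_sub, map_smul, smul_eq_mul,
      cxForm_symm M v (sroot i), he]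
    ring
  have hbdd : BddAbove (Set.range F) := ⟨C, by rintro _ ⟨w, rfl⟩; exact hFC w⟩
  set D : ℝ := μ * ∑ i, v i * v i with hD
  have hD0 : 0 < D := mul_pos hμ (Finset.sum_pos (fun i _ => mul_pos (hv i) (hv i))
    Finset.univ_nonempty)
  set K : ℝ := ∑ i, C / (μ * v i) * (1 / (2 * μ * v i)) with hK
  have hC0 : 0 ≤ C := mul_self_nonneg _
  have hK0 : 0 ≤ K := Finset.sum_nonneg fun i _ => by
    have := hv i
    positivity
  set ε := D / (K + 1) with hε
  have hε0 : 0 < ε := by positivity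
  obtain ⟨_, ⟨w, rfl⟩, hw⟩ := exists_lt_of_lt_csSup (Set.range_nonempty F)
    (sub_lt_self (sSup (Set.range F)) hε0)
  have hb : ∀ i, -(ε * (1 / (2 * μ * v i))) ≤ cxForm M (sroot i) (geom M w v) := by
    intro i
    have h1 : F (M.simple i * w) ≤ sSup (Set.range F) := le_csSup hbdd ⟨_, rfl⟩
    rw [hFs] at h1
    have hp : 0 < 2 * μ * v i := mul_pos (by linarith) (hv i)
    have h2 : -ε ≤ 2 * μ * v i * cxForm M (sroot i) (geom M w v) ∨
      2 * μ * v i * cxForm M (sroot i) (geom M w v) ≤ -ε := le_total _ _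
    have h3 : -ε ≤ 2 * μ * v i * cxForm M (sroot i) (geom M w v) := by linarith
    rw [mul_one_div, ← neg_div, div_le_iff₀ hp]
    linarith
  have hco : ∀ i, geom M w v i ≤ C / (μ * v i) := by
    intro i
    rw [le_div_iff₀ (mul_pos hμ (hv i))]
    have h1 := hFC w
    rw [hFφ] at h1
    have h2 : v i * geom M w v i ≤ ∑ i, v i * geom M w v i :=
      Finset.single_le_sum (f := fun i => v i * geom M w v i)
        (fun i _ => mul_nonneg (hv i).le (hnn w i)) (Finset.mem_univ i)
    have h3 := mul_le_mul_of_nonneg_left h2 hμ.le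
    linarith
  have h1 : cxForm M (geom M w v) (geom M w v) = -D := by
    rw [geom_preserves, cxForm_left_sum, hD, Finset.mul_sum, ← Finset.sum_neg_distrib]
    refine Finset.sum_congr rfl fun i _ => ?_
    rw [he]; ring
  have h2 : -(ε * K) ≤ cxForm M (geom M w v) (geom M w v) := by
    rw [cxForm_left_sum, hK, Finset.mul_sum, ← Finset.sum_neg_distrib]
    refine Finset.sum_le_sum fun i _ => ?_
    have hp : 0 < 1 / (2 * μ * v i) := by have := hv i; positivity
    calc -(ε * (C / (μ * v i) * (1 / (2 * μ * v i)))) =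
        -((C / (μ * v i)) * (ε * (1 / (2 * μ * v i)))) := by ring
      _ ≤ -(geom M w v i * (ε * (1 / (2 * μ * v i)))) := by
        apply neg_le_neg
        exact mul_le_mul_of_nonneg_right (hco i) (by positivity)
      _ = geom M w v i * -(ε * (1 / (2 * μ * v i))) := by ring
      _ ≤ _ := mul_le_mul_of_nonneg_left (hb i) (hnn w i)
  rw [h1] at h2
  have h3 : ε * K = D - ε := by
    rw [hε]; field_simp; ring
  linarith

theorem realized_sroot (M : CoxeterMatrix ι) (i : ι) : Realized (geom M) (cxForm M) (sroot i) :=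
  ⟨M.simple i, by
    have := M.toCoxeterSystem.simple_mul_simple_self i
    rwa [M.toCoxeterSystem_simple] at this, geom_simple M i⟩

theorem not_slender_of_indef [Nonempty ι] (M : CoxeterMatrix ι) (v : ι → ℝ) (μ : ℝ) (hμ : 0 < μ)
    (hv : ∀ i, 0 < v i) (he : ∀ i, cxForm M (sroot i) v = -μ * v i) :
    ¬ Group.Slender M.Group := by
  obtain ⟨i, w, j, h⟩ := exists_large_of_indef M v μ hμ hv he
  obtain ⟨w, c, hc, h⟩ : ∃ w, ∃ c, 1 < c ∧ cxForm M (sroot i) (geom M w (sroot j)) = -c := by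
    rcases lt_abs.mp h with h | h
    · refine ⟨M.simple i * w, _, h, ?_⟩
      rw [map_mul, Module.End.mul_apply, geom_simple, bRefl_apply, map_sub, map_smul, smul_eq_mul,
        cxForm_self]
      ring
    · exact ⟨w, _, h, by ring⟩
  set β := geom M w (sroot j) with hβ
  have hββ : cxForm M β β = 1 := by rw [hβ, geom_preserves, cxForm_self]
  obtain ⟨k, hk⟩ : ∃ k, cxForm M (sroot k) β + c * cxForm M (sroot k) (sroot i) ≠ 0 := by
    by_contra hcon
    push Not at hcon
    have h1 : cxForm M β (β + c • sroot i) = 0 := by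
      rw [cxForm_left_sum]
      refine Finset.sum_eq_zero fun k _ => ?_
      rw [map_add, map_smul, smul_eq_mul, hcon, mul_zero]
    rw [map_add, map_smul, smul_eq_mul, hββ, cxForm_symm, h] at h1
    nlinarith
  exact not_slender_of_triple (geom M) (cxForm M) (geom_preserves M) (cxForm_symm M) (sroot i) β
    (sroot k) c hc (cxForm_self M i) hββ (cxForm_self M k) h (realized_sroot M i)
    ((realized_sroot M j).map (geom_preserves M) w) (realized_sroot M k) (cxForm_abs_le M k i) hk

end Indef

section PF

variable {ι : Type*} [Fintype ι] [DecidableEq ι]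

/-- Connectedness of the Coxeter diagram. -/
def CxConn (M : CoxeterMatrix ι) : Prop :=
  ∀ P : ι → Prop, (∃ i, P i) → (∀ i j, P i → i ≠ j → M i j ≠ 2 → P j) → ∀ i, P i

theorem continuous_cxForm (M : CoxeterMatrix ι) : Continuous fun x : ι → ℝ => cxForm M x x := by
  simp only [cxForm_apply]
  fun_prop

theorem cxForm_double_sum (M : CoxeterMatrix ι) (x y : ι → ℝ) :
    cxForm M x y = ∑ i, ∑ j, x i * (y j * cxForm M (sroot i) (sroot j)) := by
  rw [cxForm_left_sum]
  refine Finset.sum_congr rfl fun i _ => ?_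
  rw [cxForm_right_sum, Finset.mul_sum]

theorem cxForm_abs_le_self (M : CoxeterMatrix ι) (x : ι → ℝ) :
    cxForm M (fun i => |x i|) (fun i => |x i|) ≤ cxForm M x x := by
  rw [cxForm_double_sum, cxForm_double_sum M x x]
  refine Finset.sum_le_sum fun i _ => Finset.sum_le_sum fun j _ => ?_
  by_cases h : i = j
  · subst h
    rw [← mul_assoc, ← mul_assoc, abs_mul_abs_self]
  · have h1 := cxForm_nonpos M h
    have h2 := le_abs_self (x i * x j)
    rw [abs_mul] at h2
    nlinarith

theorem perron_frobenius [Nonempty ι] (M : CoxeterMatrix ι) (hM : CxConn M) :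
    ∃ (v : ι → ℝ) (m : ℝ), (∀ i, 0 < v i) ∧ (∀ i, cxForm M (sroot i) v = m * v i) ∧
      ∀ x, m * ∑ i, x i ^ 2 ≤ cxForm M x x := by
  set S : Set (ι → ℝ) := {x | ∑ i, x i ^ 2 = 1} with hS
  have hcl : IsClosed S := isClosed_eq (by fun_prop) continuous_const
  have hsub : S ⊆ Set.univ.pi fun _ => Set.Icc (-1 : ℝ) 1 := by
    intro x hx i _
    have h1 : x i ^ 2 ≤ 1 := by
      rw [← show ∑ i, x i ^ 2 = 1 from hx]
      exact Finset.single_le_sum (f := fun i => x i ^ 2) (fun i _ => sq_nonneg _)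
        (Finset.mem_univ i)
    exact abs_le.mp ((sq_le_one_iff_abs_le_one _).mp h1)
  have hcomp : IsCompact S :=
    (isCompact_univ_pi fun _ => isCompact_Icc).of_isClosed_subset hcl hsub
  have hne : S.Nonempty := by
    obtain ⟨i⟩ := ‹Nonempty ι›
    refine ⟨sroot i, ?_⟩
    simp [hS, sroot, Pi.single_apply]
  obtain ⟨x₀, hx₀, hmin⟩ := hcomp.exists_isMinOn hne (continuous_cxForm M).continuousOn
  set m := cxForm M x₀ x₀ with hm
  have hquad : ∀ x, m * ∑ i, x i ^ 2 ≤ cxForm M x x := by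
    intro x
    set n := ∑ i, x i ^ 2 with hn
    have hn0 : 0 ≤ n := Finset.sum_nonneg fun i _ => sq_nonneg _
    rcases hn0.eq_or_lt with h0 | h0
    · have hx : x = 0 := by
        ext i
        have := (Finset.sum_eq_zero_iff_of_nonneg (fun i _ => sq_nonneg (x i))).mp
          (hn ▸ h0.symm) i (Finset.mem_univ i)
        simpa using this
      rw [← h0, hx]; simp
    · set r := Real.sqrt n with hr
      have hr0 : 0 < r := Real.sqrt_pos.mpr h0
      have hrr : r * r = n := Real.mul_self_sqrt hn0
      have hmem : r⁻¹ • x ∈ S := by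
        simp only [hS, Set.mem_ofPred_eq, Pi.smul_apply, smul_eq_mul, mul_pow, ← Finset.mul_sum,
          ← hn, ← hrr]
        field_simp
      have := hmin hmem
      simp only [Set.mem_ofPred_eq, map_smul, LinearMap.smul_apply, smul_eq_mul] at this
      rw [← hrr]
      have e : r⁻¹ * (r⁻¹ * cxForm M x x) * (r * r) = cxForm M x x := by field_simp
      rw [← e]
      exact mul_le_mul_of_nonneg_right this (by positivity)
  set v : ι → ℝ := fun i => |x₀ i| with hv
  have hvS : ∑ i, v i ^ 2 = 1 := by
    simp only [hv, sq_abs]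
    exact hx₀
  have hvv : cxForm M v v = m := by
    refine le_antisymm (cxForm_abs_le_self M x₀) ?_
    have := hquad v
    rwa [hvS, mul_one] at this
  have heig : ∀ i, cxForm M (sroot i) v = m * v i := by
    intro i
    have key : ∀ t : ℝ, 0 ≤ 2 * t * (cxForm M (sroot i) v - m * v i) + t ^ 2 * (1 - m) := by
      intro t
      have h1 := hquad (v + t • sroot i)
      have h2 : ∑ j, (v + t • sroot i) j ^ 2 = 1 + 2 * t * v i + t ^ 2 := by
        have : ∀ j, (v + t • sroot i) j ^ 2 = v j ^ 2 + (if j = i then 2 * t * v i + t ^ 2 else 0) := by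
          intro j
          by_cases h : j = i
          · subst h; simp [sroot]; ring
          · simp [sroot, h]
        simp only [this, Finset.sum_add_distrib, hvS]
        simp
        ring
      have h3 : cxForm M (v + t • sroot i) (v + t • sroot i) =
          m + 2 * t * cxForm M (sroot i) v + t ^ 2 := by
        simp only [map_add, map_smul, LinearMap.add_apply, LinearMap.smul_apply, smul_eq_mul, hvv,
          cxForm_self, cxForm_symm M v (sroot i)]
        ring
      rw [h2, h3] at h1
      linarith
    set a := cxForm M (sroot i) v - m * v i with ha
    by_contra hcon
    have ha0 : a ≠ 0 := sub_ne_zero.mpr hcon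
    have hb : 0 < |1 - m| + 1 := by positivity
    have h1 := key (-a / (|1 - m| + 1))
    have e : 2 * (-a / (|1 - m| + 1)) * a + (-a / (|1 - m| + 1)) ^ 2 * (1 - m) =
      (a / (|1 - m| + 1)) ^ 2 * ((1 - m) - 2 * (|1 - m| + 1)) := by
      field_simp
      ring
    rw [e] at h1
    have h2 : 0 < (a / (|1 - m| + 1)) ^ 2 := by positivity
    have h3 := le_abs_self (1 - m)
    have h4 := abs_nonneg (1 - m)
    nlinarith
  refine ⟨v, m, ?_, heig, hquad⟩
  have hv0 : ∀ i, 0 ≤ v i := fun i => abs_nonneg _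
  by_contra hcon
  push Not at hcon
  obtain ⟨i₀, hi₀⟩ := hcon
  have hall := hM (fun i => v i = 0) ⟨i₀, le_antisymm hi₀ (hv0 _)⟩ (by
    intro i j hi hij hMij
    have h1 := heig i
    rw [hi, mul_zero, cxForm_right_sum] at h1
    have h2 := (Finset.sum_eq_zero_iff_of_nonpos (by
      intro k _
      by_cases hk : i = k
      · subst hk; rw [hi, zero_mul]
      · exact mul_nonpos_of_nonneg_of_nonpos (hv0 k) (cxForm_nonpos M hk))).mp h1 j
      (Finset.mem_univ j)
    exact (mul_eq_zero.mp h2).resolve_right (cxForm_neg M hij hMij).ne)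
  simp [hall] at hvS

/-- A slender connected Coxeter group has positive semidefinite form. -/
theorem slender_trichotomy [Nonempty ι] (M : CoxeterMatrix ι) (hM : CxConn M)
    (hs : Group.Slender M.Group) :
    (∃ m : ℝ, 0 < m ∧ ∀ x, m * ∑ i, x i ^ 2 ≤ cxForm M x x) ∨
    ((∀ x, 0 ≤ cxForm M x x) ∧
      ∃ v : ι → ℝ, (∀ i, 0 < v i) ∧ (∀ i, cxForm M (sroot i) v = 0)) := by
  obtain ⟨v, m, hv, he, hq⟩ := perron_frobenius M hM
  rcases lt_trichotomy m 0 with h | h | h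
  · exact absurd hs (not_slender_of_indef M v (-m) (by linarith) hv (by simpa using he))
  · subst h
    right
    exact ⟨by simpa using hq, v, hv, by simpa using he⟩
  · exact Or.inl ⟨m, h, hq⟩

end PF

section Aff

open scoped InnerProductSpace

section Refl
variable {E : Type*} [NormedAddCommGroup E] [InnerProductSpace ℝ E]

theorem areflFun_dist (a : E) (ha : ‖a‖ = 1) (x y : E) :
    dist (x - (2 * (⟪a, x⟫_ℝ + 1)) • a) (y - (2 * (⟪a, y⟫_ℝ + 1)) • a) = dist x y := by
  rw [dist_eq_norm, dist_eq_norm]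
  have e : x - (2 * (⟪a, x⟫_ℝ + 1)) • a - (y - (2 * (⟪a, y⟫_ℝ + 1)) • a) =
      (x - y) - (2 * ⟪a, x - y⟫_ℝ) • a := by
    rw [inner_sub_right]
    module
  rw [e, ← sq_eq_sq₀ (norm_nonneg _) (norm_nonneg _), norm_sub_sq_real, inner_smul_right,
    norm_smul, ha, real_inner_comm, mul_one, Real.norm_eq_abs, sq_abs]
  ring

theorem areflFun_invol (a : E) (ha : ‖a‖ = 1) :
    Function.Involutive fun x : E => x - (2 * (⟪a, x⟫_ℝ + 1)) • a := by
  intro x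
  simp only [inner_sub_right, inner_smul_right, real_inner_self_eq_norm_sq, ha]
  module

/-- The affine reflection in the hyperplane `⟪a, x⟫ = -1`. -/
noncomputable def arefl (a : E) (ha : ‖a‖ = 1) : E ≃ᵢ E where
  toEquiv := (areflFun_invol a ha).toPerm
  isometry_toFun := Isometry.of_dist_eq (areflFun_dist a ha)

theorem arefl_apply (a : E) (ha : ‖a‖ = 1) (x : E) :
    arefl a ha x = x - (2 * (⟪a, x⟫_ℝ + 1)) • a := rfl

theorem arefl_mul_self (a : E) (ha : ‖a‖ = 1) : arefl a ha * arefl a ha = 1 := by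
  ext x
  exact areflFun_invol a ha x

theorem arefl_norm_sq (a : E) (ha : ‖a‖ = 1) (x : E) :
    ‖arefl a ha x‖ ^ 2 = ‖x‖ ^ 2 + 4 * (⟪a, x⟫_ℝ + 1) := by
  rw [arefl_apply, norm_sub_sq_real, inner_smul_right, norm_smul, ha, real_inner_comm, mul_one,
    Real.norm_eq_abs, sq_abs]
  ring

end Refl

theorem arefl_isAffineReflection {d : ℕ} (a : EuclideanSpace ℝ (Fin d)) (ha : ‖a‖ = 1) :
    IsAffineReflection (arefl a ha) := by
  have ha0 : a ≠ 0 := by rintro rfl; simp at ha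
  refine ⟨arefl_mul_self a ha, ?_, AffineSubspace.mk' (-a) (ℝ ∙ a)ᗮ, ?_, ?_⟩
  · intro h
    have h1 : arefl a ha 0 = 0 := by rw [h]; rfl
    rw [arefl_apply, inner_zero_right] at h1
    simp [ha0] at h1
  · ext x
    rw [SetLike.mem_coe, AffineSubspace.mem_mk', Submodule.mem_orthogonal_singleton_iff_inner_right]
    show _ ↔ arefl a ha x = x
    rw [arefl_apply, vsub_eq_sub, sub_neg_eq_add, inner_add_right, real_inner_self_eq_norm_sq, ha,
      sub_eq_self, smul_eq_zero]
    simp [ha0]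
  · rw [AffineSubspace.direction_mk']
    have h1 := Submodule.finrank_add_finrank_orthogonal (ℝ ∙ a)
    rw [finrank_span_singleton ha0, finrank_euclideanSpace_fin] at h1
    omega

variable {ι : Type*} [Fintype ι] [DecidableEq ι]

theorem exists_gram (M : CoxeterMatrix ι) (hM : ∀ x, 0 ≤ cxForm M x x) :
    ∃ (d : ℕ) (a : ι → EuclideanSpace ℝ (Fin d)), Submodule.span ℝ (Set.range a) = ⊤ ∧
      ∀ i j, ⟪a i, a j⟫_ℝ = cxForm M (sroot i) (sroot j) := by
  set A : Matrix ι ι ℝ := Matrix.of fun i j => cxForm M (sroot i) (sroot j) with hA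
  have hpsd : A.PosSemidef := by
    refine Matrix.PosSemidef.of_dotProduct_mulVec_nonneg ?_ fun x => ?_
    · ext i j
      simp [hA, cxForm_symm M (sroot j)]
    · have e : star x ⬝ᵥ A.mulVec x = cxForm M x x := by
        rw [cxForm_double_sum]
        simp only [dotProduct, Matrix.mulVec, hA, Matrix.of_apply, Pi.star_apply, star_trivial,
          Finset.mul_sum]
        refine Finset.sum_congr rfl fun i _ => Finset.sum_congr rfl fun j _ => ?_
        ring
      rw [e]
      exact hM x
  obtain ⟨n, C, hC⟩ := Matrix.posSemidef_iff_eq_sum_vecMulVec.mp hpsd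
  set c : ι → EuclideanSpace ℝ (Fin n) := fun i => WithLp.toLp 2 fun k => C k i with hc
  have hcc : ∀ i j, ⟪c i, c j⟫_ℝ = cxForm M (sroot i) (sroot j) := by
    intro i j
    have h1 : A i j = cxForm M (sroot i) (sroot j) := rfl
    rw [← h1, hC, Matrix.sum_apply]
    simp [hc, PiLp.inner_apply, Matrix.vecMulVec_apply, mul_comm]
  set U := Submodule.span ℝ (Set.range c) with hU
  set b := stdOrthonormalBasis ℝ U with hb
  refine ⟨_, fun i => b.repr ⟨c i, Submodule.subset_span ⟨i, rfl⟩⟩, ?_, ?_⟩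
  · have h1 : Submodule.span ℝ (Set.range fun i =>
        (⟨c i, Submodule.subset_span ⟨i, rfl⟩⟩ : U)) = ⊤ := by
      have := Submodule.span_span_coe_preimage (R := ℝ) (s := Set.range c)
      rw [← this]
      congr 1
      ext ⟨x, hx⟩
      simp [Subtype.ext_iff]
    have h2 := congrArg (Submodule.map b.repr.toLinearEquiv.toLinearMap) h1
    rw [Submodule.map_span, ← Set.range_comp, Submodule.map_top] at h2
    rw [LinearEquiv.range] at h2
    exact h2
  · intro i j
    rw [LinearIsometryEquiv.inner_map_map]
    exact hcc i j

variable {E : Type*} [NormedAddCommGroup E] [InnerProductSpace ℝ E]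

/-- Affine functions attached to vectors. -/
noncomputable def hval (a : ι → E) (v : ι → ℝ) (x : E) : ℝ := ∑ i, v i * (⟪a i, x⟫_ℝ + 1)

theorem hval_sroot (a : ι → E) (i : ι) (x : E) : hval a (sroot i) x = ⟪a i, x⟫_ℝ + 1 := by
  simp [hval, sroot, Pi.single_apply]

theorem gram_norm (M : CoxeterMatrix ι) (a : ι → E)
    (hg : ∀ i j, ⟪a i, a j⟫_ℝ = cxForm M (sroot i) (sroot j)) (i : ι) : ‖a i‖ = 1 := by
  have := hg i i
  rw [cxForm_self, real_inner_self_eq_norm_sq] at this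
  have h2 := norm_nonneg (a i)
  nlinarith

variable (M : CoxeterMatrix ι) (a : ι → E)
  (hg : ∀ i j, ⟪a i, a j⟫_ℝ = cxForm M (sroot i) (sroot j))


theorem hval_arefl (i : ι) (v : ι → ℝ) (x : E) :
    hval a v (arefl (a i) (gram_norm M a hg i) x) = hval a (bRefl (cxForm M) (sroot i) v) x := by
  have e : hval a (bRefl (cxForm M) (sroot i) v) x =
      hval a v x - 2 * cxForm M (sroot i) v * hval a (sroot i) x := by
    rw [bRefl_apply]
    simp only [hval, Pi.sub_apply, Pi.smul_apply, smul_eq_mul, sub_mul, Finset.sum_sub_distrib,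
      Finset.mul_sum]
    congr 1
    refine Finset.sum_congr rfl fun j _ => ?_
    ring
  rw [e, hval_sroot, cxForm_right_sum, arefl_apply]
  simp only [hval, Finset.mul_sum, Finset.sum_mul, ← Finset.sum_sub_distrib]
  refine Finset.sum_congr rfl fun j _ => ?_
  rw [inner_sub_right, inner_smul_right, hg, cxForm_symm M (sroot j)]
  ring

theorem eq_of_hval (hspan : Submodule.span ℝ (Set.range a) = ⊤) {x y : E}
    (h : ∀ v, hval a v x = hval a v y) : x = y := by
  rw [← sub_eq_zero]
  have h1 : ∀ z ∈ Submodule.span ℝ (Set.range a), ⟪z, x - y⟫_ℝ = 0 := by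
    intro z hz
    induction hz using Submodule.span_induction with
    | mem z hz =>
      obtain ⟨i, rfl⟩ := hz
      have := h (sroot i)
      rw [hval_sroot, hval_sroot] at this
      rw [inner_sub_right]
      linarith
    | zero => simp
    | add z w _ _ hz hw => rw [inner_add_left, hz, hw, add_zero]
    | smul c z _ hz => rw [inner_smul_left, hz, mul_zero]
  have h2 := h1 (x - y) (by rw [hspan]; trivial)
  exact inner_self_eq_zero.mp h2

theorem arefl_liftable (hspan : Submodule.span ℝ (Set.range a) = ⊤) :
    M.IsLiftable (fun i => arefl (a i) (gram_norm M a hg i)) := by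
  intro i j
  have key : ∀ (n : ℕ) (v : ι → ℝ) (x : E),
      hval a v (((arefl (a i) (gram_norm M a hg i) * arefl (a j) (gram_norm M a hg j)) ^ n) x) =
      hval a (((bRefl (cxForm M) (sroot j) * bRefl (cxForm M) (sroot i)) ^ n) v) x := by
    intro n
    induction n with
    | zero => intro v x; rfl
    | succ n ih =>
      intro v x
      rw [pow_succ', pow_succ, Module.End.mul_apply, Module.End.mul_apply, ← ih, ← hval_arefl M a hg,
        ← hval_arefl M a hg]
      rfl
  ext x
  refine eq_of_hval a hspan fun v => ?_
  rw [key, ← M.symmetric j i, geom_liftable M j i]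
  rfl

/-- The affine action. -/
noncomputable def affAct (hspan : Submodule.span ℝ (Set.range a) = ⊤) : M.Group →* (E ≃ᵢ E) :=
  M.toCoxeterSystem.lift ⟨_, arefl_liftable M a hg hspan⟩

variable (hspan : Submodule.span ℝ (Set.range a) = ⊤)

theorem affAct_simple (i : ι) :
    affAct M a hg hspan (M.simple i) = arefl (a i) (gram_norm M a hg i) :=
  M.toCoxeterSystem.lift_apply_simple (arefl_liftable M a hg hspan) i

theorem hval_affAct (w : M.Group) (v : ι → ℝ) (x : E) :
    hval a v (affAct M a hg hspan w x) = hval a (geom M w⁻¹ v) x := by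
  induction w using M.toCoxeterSystem.simple_induction_left generalizing v with
  | one => simp
  | mul_simple_left w i ih =>
    rw [map_mul, IsometryEquiv.mul_apply, M.toCoxeterSystem_simple, affAct_simple, hval_arefl M a hg,
      ih, mul_inv_rev, map_mul, Module.End.mul_apply, ← geom_simple]
    have : (M.simple i)⁻¹ = M.simple i := by
      rw [← M.toCoxeterSystem_simple]
      simp only [CoxeterSystem.inv_simple]
    rw [this]

theorem affAct_zero_norm (w : M.Group) (hw : w ≠ 1) : 1 ≤ ‖affAct M a hg hspan w 0‖ := by
  obtain ⟨i, hi⟩ := exists_geom_neg M w⁻¹ (by simpa using hw)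
  have h1 := hval_affAct M a hg hspan w (sroot i) 0
  rw [hval_sroot] at h1
  have h2 : hval a (geom M w⁻¹ (sroot i)) 0 ≤ 0 := by
    simp only [hval, inner_zero_right, zero_add, mul_one]
    exact Finset.sum_nonpos fun j _ => hi j
  have h3 := abs_real_inner_le_norm (a i) (affAct M a hg hspan w 0)
  rw [gram_norm M a hg, one_mul] at h3
  have := (abs_le.mp h3).1
  linarith

theorem affAct_sep (w w' : M.Group) (h : w ≠ w') :
    1 ≤ dist (affAct M a hg hspan w 0) (affAct M a hg hspan w' 0) := by
  have h1 := affAct_zero_norm M a hg hspan (w'⁻¹ * w) (by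
    intro h2; exact h (inv_mul_eq_one.mp h2).symm)
  rw [← dist_zero_right, ← (affAct M a hg hspan w').dist_eq, ← IsometryEquiv.mul_apply, ← map_mul,
    mul_inv_cancel_left] at h1
  exact h1

theorem affAct_injective : Function.Injective (affAct M a hg hspan) := by
  intro w w' h
  by_contra hne
  have := affAct_sep M a hg hspan w w' hne
  rw [h, dist_self] at this
  linarith

theorem affAct_finite [FiniteDimensional ℝ E] (R : ℝ) :
    {w : M.Group | ‖affAct M a hg hspan w 0‖ ≤ R}.Finite := by
  have : ProperSpace E := FiniteDimensional.proper_real E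
  obtain ⟨t, -, ht, hcov⟩ := (isCompact_closedBall (0 : E) R).finite_cover_balls
    (e := 1 / 2) (by norm_num)
  have hch : ∀ w : M.Group, ∃ y, ‖affAct M a hg hspan w 0‖ ≤ R →
      y ∈ t ∧ dist (affAct M a hg hspan w 0) y < 1 / 2 := by
    intro w
    by_cases hw : ‖affAct M a hg hspan w 0‖ ≤ R
    · have := hcov (show affAct M a hg hspan w 0 ∈ Metric.closedBall (0 : E) R by simpa using hw)
      simp only [Set.mem_iUnion, Metric.mem_ball, exists_prop] at this
      obtain ⟨y, hy⟩ := this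
      exact ⟨y, fun _ => hy⟩
    · exact ⟨0, fun h => absurd h hw⟩
  choose f hf using hch
  refine Set.Finite.of_injOn (f := f) (t := t) (fun w hw => (hf w hw).1) ?_ ht
  intro w hw w' hw' h
  by_contra hne
  have h1 := affAct_sep M a hg hspan w w' hne
  have h2 := (hf w hw).2
  have h3 := (hf w' hw').2
  rw [← h] at h3
  have := dist_triangle_right (affAct M a hg hspan w 0) (affAct M a hg hspan w' 0) (f w)
  linarith

theorem affAct_norm_le (w : M.Group) (x : E) :
    ‖affAct M a hg hspan w 0‖ ≤ ‖x‖ + ‖affAct M a hg hspan w x‖ := by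
  have h := dist_triangle (affAct M a hg hspan w 0) (affAct M a hg hspan w x) 0
  rw [IsometryEquiv.dist_eq, dist_zero_left, dist_zero_right, dist_zero_right] at h
  exact h

/-- Positive definite case. -/
theorem finite_of_posDef (M : CoxeterMatrix ι) (m : ℝ) (hm : 0 < m)
    (hq : ∀ x, m * ∑ i, x i ^ 2 ≤ cxForm M x x) : Finite M.Group := by
  obtain ⟨d, a, hspan, hg⟩ := exists_gram M fun x =>
    (mul_nonneg hm.le (Finset.sum_nonneg fun i _ => sq_nonneg (x i))).trans (hq x)
  have hinj : Function.Injective (LinearMap.pi fun i => cxForm M (sroot i)) := by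
    rw [← LinearMap.ker_eq_bot, LinearMap.ker_eq_bot']
    intro x hx
    have h1 : cxForm M x x = 0 := by
      rw [cxForm_left_sum]
      refine Finset.sum_eq_zero fun i _ => ?_
      have := congrFun hx i
      simp only [LinearMap.pi_apply, Pi.zero_apply] at this
      rw [this, mul_zero]
    have h2 := hq x
    rw [h1] at h2
    have h3 : ∑ i, x i ^ 2 = 0 := by
      have : 0 ≤ ∑ i, x i ^ 2 := Finset.sum_nonneg fun i _ => sq_nonneg (x i)
      nlinarith
    ext i
    simpa using (Finset.sum_eq_zero_iff_of_nonneg (fun i _ => sq_nonneg (x i))).mp h3 i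
      (Finset.mem_univ i)
  obtain ⟨x, hx⟩ := (LinearMap.injective_iff_surjective.mp hinj) fun _ => -1
  set p := ∑ j, x j • a j with hp
  have hpi : ∀ i, ⟪a i, p⟫_ℝ = -1 := by
    intro i
    have := congrFun hx i
    simp only [LinearMap.pi_apply] at this
    rw [← this, cxForm_right_sum, hp, inner_sum]
    refine Finset.sum_congr rfl fun j _ => ?_
    rw [inner_smul_right, hg]
  have hfix : ∀ w, affAct M a hg hspan w p = p := by
    intro w
    induction w using M.toCoxeterSystem.simple_induction_left with
    | one => simp
    | mul_simple_left w i ih =>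
      rw [map_mul, IsometryEquiv.mul_apply, ih, M.toCoxeterSystem_simple, affAct_simple,
        arefl_apply, hpi]
      simp
  have := affAct_finite M a hg hspan (2 * ‖p‖)
  rw [← Set.finite_univ_iff]
  refine this.subset fun w _ => ?_
  have := affAct_norm_le M a hg hspan w p
  rw [hfix] at this
  show ‖affAct M a hg hspan w 0‖ ≤ 2 * ‖p‖
  linarith

theorem euclidean_of_psd (M : CoxeterMatrix ι) (hM : CxConn M) (hpsd : ∀ x, 0 ≤ cxForm M x x)
    (δ : ι → ℝ) (hδ : ∀ i, 0 < δ i) (hδ0 : ∀ i, cxForm M (sroot i) δ = 0) :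
    ∃ (d : ℕ) (W : Subgroup (EuclideanSpace ℝ (Fin d) ≃ᵢ EuclideanSpace ℝ (Fin d))),
      IsIrreducibleEuclideanReflectionSubgroup W ∧ Nonempty (M.Group ≃* W) := by
  obtain ⟨d, a, hspan, hg⟩ := exists_gram M hpsd
  refine ⟨d, (affAct M a hg hspan).range, ?_,
    ⟨MonoidHom.ofInjective (affAct_injective M a hg hspan)⟩⟩
  constructor
  · apply le_antisymm
    · rintro _ ⟨w, rfl⟩
      induction w using M.toCoxeterSystem.simple_induction_left with
      | one => rw [map_one]; exact one_mem _
      | mul_simple_left w i ih =>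
        rw [map_mul]
        refine mul_mem (Subgroup.subset_closure ⟨⟨_, rfl⟩, ?_⟩) ih
        rw [M.toCoxeterSystem_simple, affAct_simple]
        exact arefl_isAffineReflection _ _
    · rw [Subgroup.closure_le]
      exact fun f hf => hf.1
  · intro K L hK hL
    obtain ⟨R, hR⟩ := hK.isBounded.exists_norm_le
    obtain ⟨R', hR'⟩ := hL.isBounded.exists_norm_le
    refine ((affAct_finite M a hg hspan (R + R')).image (affAct M a hg hspan)).subset ?_
    rintro _ ⟨⟨w, rfl⟩, _, ⟨x, hx, rfl⟩, hxL⟩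
    refine ⟨w, ?_, rfl⟩
    exact (affAct_norm_le M a hg hspan w x).trans (add_le_add (hR x hx) (hR' _ hxL))
  · set K : Set (EuclideanSpace ℝ (Fin d)) := {x | ∀ i, 0 ≤ ⟪a i, x⟫_ℝ + 1} with hK
    have hδa : ∑ i, δ i • a i = 0 := by
      rw [← inner_self_eq_zero (𝕜 := ℝ), inner_sum]
      refine Finset.sum_eq_zero fun i _ => ?_
      rw [inner_smul_right, sum_inner]
      have h1 := hδ0 i
      rw [cxForm_right_sum] at h1
      rw [← mul_zero (δ i), ← h1]
      congr 1
      refine Finset.sum_congr rfl fun j _ => ?_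
      rw [inner_smul_left, hg, cxForm_symm M (sroot j)]
      rfl
    refine ⟨K, ?_, ?_⟩
    · apply Metric.isCompact_of_isClosed_isBounded
      · rw [hK]
        have : {x : EuclideanSpace ℝ (Fin d) | ∀ i, 0 ≤ ⟪a i, x⟫_ℝ + 1} =
            ⋂ i, {x : EuclideanSpace ℝ (Fin d) | 0 ≤ ⟪a i, x⟫_ℝ + 1} := by
          ext x; simp
        rw [this]
        exact isClosed_iInter fun i => isClosed_le continuous_const (by fun_prop)
      · set T : EuclideanSpace ℝ (Fin d) →ₗ[ℝ] (ι → ℝ) :=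
          LinearMap.pi fun i => innerₛₗ ℝ (a i) with hT
        have hTa : ∀ x i, T x i = ⟪a i, x⟫_ℝ := fun x i => rfl
        have hTk : T.ker = ⊥ := by
          rw [LinearMap.ker_eq_bot']
          intro x hx
          refine eq_of_hval a hspan fun v => ?_
          simp only [hval]
          refine Finset.sum_congr rfl fun i _ => ?_
          rw [← hTa, hx]
          simp
        obtain ⟨c, -, hc⟩ := T.exists_antilipschitzWith hTk
        set D := ∑ i, δ i / δ i with hD
        have hb : Bornology.IsBounded (Set.univ.pi fun i =>
            Set.Icc (-1 : ℝ) ((∑ j, δ j) / δ i)) :=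
          (isCompact_univ_pi fun _ => isCompact_Icc).isBounded
        refine (hc.isBounded_preimage hb).subset ?_
        intro x hx i _
        have hx' : ∀ i, 0 ≤ ⟪a i, x⟫_ℝ + 1 := hx
        constructor
        · rw [hTa]; linarith [hx' i]
        · rw [hTa, le_div_iff₀ (hδ i)]
          have h1 : ∑ j, δ j * (⟪a j, x⟫_ℝ + 1) = ∑ j, δ j := by
            have : ⟪∑ i, δ i • a i, x⟫_ℝ = 0 := by rw [hδa, inner_zero_left]
            rw [sum_inner] at this
            simp only [inner_smul_left, RCLike.conj_to_real] at this
            simp only [mul_add, mul_one, Finset.sum_add_distrib, this, zero_add]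
          have h2 : δ i * (⟪a i, x⟫_ℝ + 1) ≤ ∑ j, δ j * (⟪a j, x⟫_ℝ + 1) :=
            Finset.single_le_sum (f := fun j => δ j * (⟪a j, x⟫_ℝ + 1))
              (fun j _ => mul_nonneg (hδ j).le (hx' j)) (Finset.mem_univ i)
          rw [h1] at h2
          have := hδ i
          linarith
    · intro x
      have hfin : {w : M.Group | ‖affAct M a hg hspan w x‖ ≤ ‖x‖}.Finite := by
        refine (affAct_finite M a hg hspan (2 * ‖x‖)).subset fun w hw => ?_
        have := affAct_norm_le M a hg hspan w x
        have hw' : ‖affAct M a hg hspan w x‖ ≤ ‖x‖ := hw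
        show ‖affAct M a hg hspan w 0‖ ≤ 2 * ‖x‖
        linarith
      obtain ⟨w, hw, hmin⟩ := Set.exists_min_image _ (fun w => ‖affAct M a hg hspan w x‖) hfin
        ⟨1, by simp⟩
      refine ⟨_, ⟨w, rfl⟩, ?_⟩
      intro i
      have hle : ‖affAct M a hg hspan w x‖ ≤ ‖affAct M a hg hspan (M.simple i * w) x‖ := by
        by_cases h : ‖affAct M a hg hspan (M.simple i * w) x‖ ≤ ‖x‖
        · exact hmin _ h
        · exact (show ‖affAct M a hg hspan w x‖ ≤ ‖x‖ from hw).trans (not_le.mp h).le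
      rw [map_mul, IsometryEquiv.mul_apply, affAct_simple] at hle
      have h2 := arefl_norm_sq (a i) (gram_norm M a hg i) (affAct M a hg hspan w x)
      have h3 := pow_le_pow_left₀ (norm_nonneg _) hle 2
      linarith
  · intro U hU
    have hdich : ∀ i, a i ∉ U → ∀ u ∈ U, ⟪a i, u⟫_ℝ = 0 := by
      intro i hi u hu
      by_contra hne
      have h1 := hU _ ⟨M.simple i, rfl⟩ u 0 (by simpa using hu)
      rw [affAct_simple, arefl_apply, arefl_apply, inner_zero_right] at h1
      have e : u - (2 * (⟪a i, u⟫_ℝ + 1)) • a i - (0 - (2 * (0 + 1) : ℝ) • a i) =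
        u - (2 * ⟪a i, u⟫_ℝ) • a i := by module
      rw [e, U.sub_mem_iff_right hu] at h1
      exact hi ((U.smul_mem_iff (mul_ne_zero two_ne_zero hne)).mp h1)
    by_cases hex : ∃ i, a i ∈ U
    · right
      have hall := hM (fun i => a i ∈ U) hex (by
        intro i j hi hij hMij
        by_contra hj
        have h1 := hdich j hj _ hi
        rw [hg, cxForm_symm] at h1
        exact (cxForm_neg M hij hMij).ne h1)
      rw [eq_top_iff, ← hspan, Submodule.span_le]
      rintro _ ⟨i, rfl⟩
      exact hall i
    · left
      push Not at hex
      rw [eq_bot_iff]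
      intro u hu
      rw [Submodule.mem_bot]
      refine eq_of_hval a hspan fun v => ?_
      simp only [hval]
      refine Finset.sum_congr rfl fun i _ => ?_
      rw [hdich i (hex i) u hu, inner_zero_right]

end Aff

section Decomp

theorem cx_hom_ext {B G : Type*} [Monoid G] (N : CoxeterMatrix B) {f g : N.Group →* G}
    (h : ∀ i, f (N.simple i) = g (N.simple i)) : f = g := by
  refine N.toCoxeterSystem.ext_simple fun i => ?_
  rw [N.toCoxeterSystem_simple]
  exact h i

theorem cx_induction {B : Type*} (N : CoxeterMatrix B) {p : N.Group → Prop} (one : p 1)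
    (mul : ∀ w i, p w → p (N.simple i * w)) (w : N.Group) : p w := by
  induction w using N.toCoxeterSystem.simple_induction_left with
  | one => exact one
  | mul_simple_left w i ih =>
    rw [N.toCoxeterSystem_simple]
    exact mul w i ih

theorem cx_pow {B : Type*} (N : CoxeterMatrix B) (i j : B) :
    (N.simple i * N.simple j) ^ N i j = 1 := by
  have := N.toCoxeterSystem.simple_mul_simple_pow i j
  rwa [N.toCoxeterSystem_simple] at this

theorem cx_sq {B : Type*} (N : CoxeterMatrix B) (i : B) :
    N.simple i * N.simple i = 1 := by
  have := N.toCoxeterSystem.simple_mul_simple_self i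
  rwa [N.toCoxeterSystem_simple] at this

theorem cx_comm {B : Type*} (N : CoxeterMatrix B) (i j : B) (h : N i j = 2) :
    Commute (N.simple i) (N.simple j) := by
  have h1 := cx_pow N i j
  rw [h, pow_two] at h1
  have h2 := eq_inv_of_mul_eq_one_left h1
  rw [mul_inv_rev, inv_eq_of_mul_eq_one_left (cx_sq N i), inv_eq_of_mul_eq_one_left (cx_sq N j)] at h2
  exact h2

theorem cx_decomp {B J : Type*} [Finite J] (N : CoxeterMatrix B) (Bt : J → Type*)
    (Nt : ∀ j, CoxeterMatrix (Bt j)) (e : ∀ j, Bt j → B)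
    (hbij : Function.Bijective fun p : Σ j, Bt j => e p.1 p.2)
    (hN : ∀ j a b, N (e j a) (e j b) = Nt j a b)
    (hN2 : ∀ j k a b, j ≠ k → N (e j a) (e k b) = 2) :
    Nonempty (N.Group ≃* ∀ j, (Nt j).Group) := by
  classical
  have := Fintype.ofFinite J
  set E := Equiv.ofBijective _ hbij with hE
  have hEs : ∀ j a, E.symm (e j a) = ⟨j, a⟩ := fun j a => by
    rw [Equiv.symm_apply_eq]; rfl
  set f : B → ∀ j, (Nt j).Group := fun b =>
    Pi.mulSingle (E.symm b).1 ((Nt (E.symm b).1).simple (E.symm b).2) with hf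
  have hfe : ∀ j a, f (e j a) = Pi.mulSingle j ((Nt j).simple a) := by
    intro j a
    simp only [hf]
    rw [hEs]
  have hlift : N.IsLiftable f := by
    intro b b'
    obtain ⟨⟨j, a⟩, rfl⟩ := E.surjective b
    obtain ⟨⟨k, a'⟩, rfl⟩ := E.surjective b'
    show (f (e j a) * f (e k a')) ^ N (e j a) (e k a') = 1
    rw [hfe, hfe]
    by_cases hjk : j = k
    · subst hjk
      rw [hN, ← Pi.mulSingle_mul, ← Pi.mulSingle_pow, cx_pow, Pi.mulSingle_one]
    · rw [hN2 _ _ _ _ hjk]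
      have hc : Commute (Pi.mulSingle j ((Nt j).simple a) : ∀ j, (Nt j).Group)
        (Pi.mulSingle k ((Nt k).simple a')) := Pi.mulSingle_commute hjk _ _
      rw [hc.mul_pow, pow_two, pow_two, ← Pi.mulSingle_mul, ← Pi.mulSingle_mul, cx_sq, cx_sq,
        Pi.mulSingle_one, Pi.mulSingle_one, one_mul]
  set F : N.Group →* ∀ j, (Nt j).Group := N.toCoxeterSystem.lift ⟨f, hlift⟩ with hF
  have hFs : ∀ b, F (N.simple b) = f b := fun b => N.toCoxeterSystem.lift_apply_simple hlift b
  have hlift' : ∀ j, (Nt j).IsLiftable fun a => N.simple (e j a) := by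
    intro j a b
    rw [← hN, cx_pow]
  set ϕ : ∀ j, (Nt j).Group →* N.Group := fun j => (Nt j).toCoxeterSystem.lift ⟨_, hlift' j⟩ with hϕ
  have hϕs : ∀ j a, ϕ j ((Nt j).simple a) = N.simple (e j a) := fun j a =>
    (Nt j).toCoxeterSystem.lift_apply_simple (hlift' j) a
  have hcomm : Pairwise fun j k => ∀ x y, Commute (ϕ j x) (ϕ k y) := by
    intro j k hjk x y
    induction x using cx_induction with
    | one => rw [map_one]; exact Commute.one_left _
    | mul x a hx =>
      rw [map_mul]
      refine Commute.mul_left ?_ hx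
      induction y using cx_induction with
      | one => rw [map_one]; exact Commute.one_right _
      | mul y b hy =>
        rw [map_mul] at hx ⊢
        have h2 : Commute (ϕ j ((Nt j).simple a)) (ϕ k ((Nt k).simple b)) := by
          rw [hϕs, hϕs]
          exact cx_comm _ _ _ (hN2 _ _ _ _ hjk)
        refine Commute.mul_right h2 (hy ?_)
        rw [hϕs k b] at hx
        have h3 : Commute (ϕ j x) (N.simple (e k b)) := by
          clear hx hy h2
          induction x using cx_induction with
          | one => rw [map_one]; exact Commute.one_left _
          | mul x c hx =>
            rw [map_mul, hϕs]
            exact Commute.mul_left (cx_comm _ _ _ (hN2 _ _ _ _ hjk)) hx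
        have h4 := h3.mul_right hx
        rw [← mul_assoc, cx_sq, one_mul] at h4
        exact h4
  set Gm := MonoidHom.noncommPiCoprod ϕ hcomm with hG
  have hGs : ∀ j x, Gm (Pi.mulSingle j x) = ϕ j x := fun j x =>
    MonoidHom.noncommPiCoprod_mulSingle _ _ _
  refine ⟨MonoidHom.toMulEquiv F Gm ?_ ?_⟩
  · refine cx_hom_ext N fun b => ?_
    obtain ⟨⟨j, a⟩, rfl⟩ := E.surjective b
    show Gm (F (N.simple (e j a))) = N.simple (e j a)
    rw [hFs, hfe, hGs, hϕs]
  · refine MonoidHom.pi_ext fun j x => ?_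
    have h : (F.comp (ϕ j)) = MonoidHom.mulSingle (fun j => (Nt j).Group) j := by
      refine cx_hom_ext _ fun a => ?_
      rw [MonoidHom.comp_apply, hϕs, hFs, hfe]
      rfl
    rw [MonoidHom.comp_apply, hGs]
    exact DFunLike.congr_fun h x

/-- Product over `Bool`. -/
def piBoolMulEquiv (A : Bool → Type*) [∀ b, Group (A b)] : (∀ b, A b) ≃* A true × A false where
  toFun x := (x true, x false)
  invFun p b := match b with
    | true => p.1
    | false => p.2
  left_inv x := by ext b; cases b <;> rfl
  right_inv _ := rfl
  map_mul' _ _ := rfl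

theorem slender_of_injective {G H : Type*} [Group G] [Group H] (f : G →* H)
    (hf : Function.Injective f) (h : Group.Slender H) : Group.Slender G := by
  intro K
  have h1 := h (K.map f)
  rw [← Group.fg_iff_subgroup_fg] at h1 ⊢
  haveI := h1
  exact Group.fg_of_surjective (f := (K.equivMapOfInjective f hf).symm.toMonoidHom)
    (MulEquiv.surjective _)

variable {V : Type} [Fintype V]

/-- The graph of non-commuting pairs. -/
def cxGraph (M : CoxeterMatrix V) : SimpleGraph V where
  Adj i j := i ≠ j ∧ M i j ≠ 2
  symm := ⟨fun i j h => ⟨h.1.symm, by rw [M.symmetric]; exact h.2⟩⟩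
  loopless := ⟨fun i h => h.1 rfl⟩

/-- A connected component. -/
def cxComp (M : CoxeterMatrix V) (j : (cxGraph M).ConnectedComponent) : Set V :=
  {v | (cxGraph M).connectedComponentMk v = j}

theorem two_of_ne_comp (M : CoxeterMatrix V) {v w : V}
    (h : (cxGraph M).connectedComponentMk v ≠ (cxGraph M).connectedComponentMk w) : M v w = 2 := by
  by_contra hne
  apply h
  rw [SimpleGraph.ConnectedComponent.eq]
  refine SimpleGraph.Adj.reachable ⟨?_, hne⟩
  rintro rfl
  exact h rfl

theorem cxConn_comp (M : CoxeterMatrix V) (j : (cxGraph M).ConnectedComponent) :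
    CxConn (M.restrict (cxComp M j)) := by
  rintro P ⟨i, hi⟩ hP w
  have key : ∀ v : V, Relation.ReflTransGen (cxGraph M).Adj i v →
      ∀ hv : v ∈ cxComp M j, P ⟨v, hv⟩ := by
    intro v hv
    induction hv with
    | refl => intro _; exact hi
    | @tail b c hb hbc ih =>
      intro hc
      have hbm : b ∈ cxComp M j := by
        rw [← show (cxGraph M).connectedComponentMk c = j from hc]
        exact SimpleGraph.ConnectedComponent.eq.mpr hbc.reachable
      exact hP ⟨b, hbm⟩ ⟨c, hc⟩ (ih hbm) (fun h => hbc.1 (congrArg Subtype.val h)) hbc.2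
  refine key w ?_ w.2
  rw [← SimpleGraph.reachable_iff_reflTransGen]
  apply SimpleGraph.ConnectedComponent.eq.mp
  exact i.2.trans (show (cxGraph M).connectedComponentMk w = j from w.2).symm

theorem slender_comp (M : CoxeterMatrix V) (hs : Group.Slender M.Group)
    (j : (cxGraph M).ConnectedComponent) : Group.Slender (M.restrict (cxComp M j)).Group := by
  classical
  obtain ⟨φ⟩ := cx_decomp M (fun j => cxComp M j) (fun j => M.restrict (cxComp M j))
    (fun j a => a.1) (by
      constructor
      · rintro ⟨j, a, ha⟩ ⟨k, b, hb⟩ (h : a = b)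
        have ha' : _ = j := ha
        have hb' : _ = k := hb
        subst h
        subst ha'
        subst hb'
        rfl
      · intro v
        exact ⟨⟨(cxGraph M).connectedComponentMk v, v, rfl⟩, rfl⟩) (fun _ _ _ => rfl) (by
      rintro j k ⟨a, ha⟩ ⟨b, hb⟩ hjk
      refine two_of_ne_comp M ?_
      rw [show (cxGraph M).connectedComponentMk a = j from ha,
        show (cxGraph M).connectedComponentMk b = k from hb]
      exact hjk)
  refine slender_of_injective (φ.symm.toMonoidHom.comp
    (MonoidHom.mulSingle (fun j => (M.restrict (cxComp M j)).Group) j)) ?_ hs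
  intro x y h
  exact Pi.mulSingle_injective (M := fun j => (M.restrict (cxComp M j)).Group) j
    (φ.symm.injective h)

theorem decomposition_of_slender (M : CoxeterMatrix V) (hs : Group.Slender M.Group) :
      ∃ S₁ S₂ : Set V,
        Nonempty (M.Group ≃* (M.restrict S₁).Group × (M.restrict S₂).Group) ∧
        Finite (M.restrict S₁).Group ∧
        ∃ (k : ℕ) (d : Fin k → ℕ)
          (W : ∀ i : Fin k,
            Subgroup (EuclideanSpace ℝ (Fin (d i)) ≃ᵢ EuclideanSpace ℝ (Fin (d i)))),
          (∀ i, IsIrreducibleEuclideanReflectionSubgroup (W i)) ∧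
          Nonempty ((M.restrict S₂).Group ≃* ∀ i, ↥(W i)) := by
  classical
  set J := (cxGraph M).ConnectedComponent with hJ
  set mk : V → J := (cxGraph M).connectedComponentMk with hmk
  set fin : J → Prop := fun j => Finite (M.restrict (cxComp M j)).Group with hfin
  have hinf : ∀ j, ¬ fin j → ∃ (d : ℕ)
      (W : Subgroup (EuclideanSpace ℝ (Fin d) ≃ᵢ EuclideanSpace ℝ (Fin d))),
      IsIrreducibleEuclideanReflectionSubgroup W ∧
      Nonempty ((M.restrict (cxComp M j)).Group ≃* W) := by
    intro j hj
    have hne : Nonempty (cxComp M j) := by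
      obtain ⟨v, hv⟩ := Quot.exists_rep j
      exact ⟨⟨v, hv⟩⟩
    rcases slender_trichotomy _ (cxConn_comp M j) (slender_comp M hs j) with
      ⟨m, hm, hq⟩ | ⟨hpsd, δ, hδ, hδ0⟩
    · exact absurd (finite_of_posDef _ m hm hq) hj
    · exact euclidean_of_psd _ (cxConn_comp M j) hpsd δ hδ hδ0
  refine ⟨{v | fin (mk v)}, {v | ¬ fin (mk v)}, ?_, ?_, ?_⟩
  · set S : Bool → Set V := fun b => match b with
      | true => {v | fin (mk v)}
      | false => {v | ¬ fin (mk v)} with hS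
    obtain ⟨φ⟩ := cx_decomp M (fun b => S b) (fun b => M.restrict (S b)) (fun b a => a.1) (by
      constructor
      · rintro ⟨b, v, hv⟩ ⟨b', v', hv'⟩ (h : v = v')
        subst h
        cases b <;> cases b'
        · rfl
        · exact absurd hv' hv
        · exact absurd hv hv'
        · rfl
      · intro v
        by_cases h : fin (mk v)
        · exact ⟨⟨true, v, h⟩, rfl⟩
        · exact ⟨⟨false, v, h⟩, rfl⟩) (fun _ _ _ => rfl) (by
      rintro b b' ⟨v, hv⟩ ⟨v', hv'⟩ hb
      refine two_of_ne_comp M fun h => ?_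
      have h' : mk v = mk v' := h
      cases b <;> cases b'
      · exact hb rfl
      · exact hv (show fin (mk v) from h' ▸ hv')
      · exact hv' (show fin (mk v') from h' ▸ hv)
      · exact hb rfl)
    exact ⟨φ.trans (piBoolMulEquiv fun b => (M.restrict (S b)).Group)⟩
  · obtain ⟨φ⟩ := cx_decomp (M.restrict {v | fin (mk v)}) (fun j : {j // fin j} => cxComp M j.1)
      (fun j => M.restrict (cxComp M j.1))
      (fun j a => ⟨a.1, by
        show fin (mk a.1)
        rw [show mk a.1 = j.1 from a.2]
        exact j.2⟩) (by
      constructor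
      · rintro ⟨⟨j, hj⟩, a, ha⟩ ⟨⟨k, hk⟩, b, hb⟩ h
        have h' : a = b := congrArg Subtype.val h
        have ha' : _ = j := ha
        have hb' : _ = k := hb
        subst h'
        subst ha'
        subst hb'
        rfl
      · rintro ⟨v, hv⟩
        exact ⟨⟨⟨mk v, hv⟩, v, rfl⟩, rfl⟩) (fun _ _ _ => rfl) (by
      rintro j k ⟨a, ha⟩ ⟨b, hb⟩ hjk
      refine two_of_ne_comp M fun h => hjk (Subtype.ext ?_)
      exact ((show mk a = j.1 from ha).symm.trans h).trans (show mk b = k.1 from hb))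
    have : ∀ j : {j // fin j}, Finite (M.restrict (cxComp M j.1)).Group := fun j => j.2
    exact Finite.of_equiv _ φ.symm.toEquiv
  · obtain ⟨k, ⟨E⟩⟩ := Finite.exists_equiv_fin {j // ¬ fin j}
    choose d W hW hφ using hinf
    obtain ⟨φ⟩ := cx_decomp (M.restrict {v | ¬ fin (mk v)})
      (fun i : Fin k => cxComp M (E.symm i).1)
      (fun i => M.restrict (cxComp M (E.symm i).1))
      (fun i a => ⟨a.1, by
        show ¬ fin (mk a.1)
        rw [show mk a.1 = (E.symm i).1 from a.2]
        exact (E.symm i).2⟩) (by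
      constructor
      · rintro ⟨i, a, ha⟩ ⟨i', b, hb⟩ h
        have h' : a = b := congrArg Subtype.val h
        have ha' : mk a = (E.symm i).1 := ha
        have hb' : mk b = (E.symm i').1 := hb
        have : i = i' := by
          apply E.symm.injective
          apply Subtype.ext
          rw [← ha', ← hb', h']
        subst this
        subst h'
        rfl
      · rintro ⟨v, hv⟩
        refine ⟨⟨E ⟨mk v, hv⟩, v, ?_⟩, rfl⟩
        show mk v = _
        rw [Equiv.symm_apply_apply]) (fun _ _ _ => rfl) (by
      rintro i i' ⟨a, ha⟩ ⟨b, hb⟩ hjk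
      refine two_of_ne_comp M fun h => hjk (E.symm.injective (Subtype.ext ?_))
      exact ((show mk a = (E.symm i).1 from ha).symm.trans h).trans
        (show mk b = (E.symm i').1 from hb))
    refine ⟨k, fun i => d (E.symm i).1 (E.symm i).2, fun i => W (E.symm i).1 (E.symm i).2,
      fun i => hW _ _, ⟨φ.trans (MulEquiv.piCongrRight fun i => ?_)⟩⟩
    exact (hφ (E.symm i).1 (E.symm i).2).some

end Decomp

section SlenderClosure

theorem slender_of_finite {G : Type*} [Group G] [Finite G] : Group.Slender G := by
  intro K
  rw [← Group.fg_iff_subgroup_fg]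
  infer_instance

theorem slender_ext {G Q : Type*} [Group G] [Group Q] (f : G →* Q) (hQ : Group.Slender Q)
    (hk : Group.Slender f.ker) : Group.Slender G := by
  classical
  intro H
  obtain ⟨T, hT⟩ := hQ (H.map f)
  obtain ⟨S, hS⟩ := hk (H.subgroupOf f.ker)
  have hTm : ∀ t : T, ∃ g ∈ H, f g = t := by
    intro t
    have : (t : Q) ∈ H.map f := by
      rw [← hT]; exact Subgroup.subset_closure t.2
    exact this
  choose g hgH hg using hTm
  refine ⟨Finset.univ.image g ∪ S.image Subtype.val, le_antisymm ?_ ?_⟩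
  · rw [Subgroup.closure_le]
    intro x hx
    simp only [Finset.coe_union, Finset.coe_image, Finset.coe_univ, Set.image_univ,
      Set.mem_union, Set.mem_range, Set.mem_image, SetLike.mem_coe] at hx ⊢
    rcases hx with ⟨t, rfl⟩ | ⟨y, hy, rfl⟩
    · exact hgH t
    · have : y ∈ H.subgroupOf f.ker := by rw [← hS]; exact Subgroup.subset_closure hy
      exact this
  · set C := Subgroup.closure
      ((Finset.univ.image g ∪ S.image Subtype.val : Finset G) : Set G) with hC
    have h1 : H.map f ≤ C.map f := by
      rw [← hT, Subgroup.closure_le]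
      intro t ht
      refine ⟨g ⟨t, ht⟩, Subgroup.subset_closure ?_, hg ⟨t, ht⟩⟩
      simp
    have h2 : ∀ x ∈ H, x ∈ f.ker → x ∈ C := by
      intro x hx hxk
      have h3 : H.subgroupOf f.ker ≤ C.subgroupOf f.ker := by
        rw [← hS, Subgroup.closure_le]
        intro y hy
        refine Subgroup.subset_closure ?_
        simp only [Finset.coe_union, Finset.coe_image, Set.mem_union, Set.mem_image]
        exact Or.inr ⟨y, hy, rfl⟩
      exact h3 (show (⟨x, hxk⟩ : f.ker) ∈ H.subgroupOf f.ker from hx)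
    have h4 : C ≤ H := by
      rw [hC, Subgroup.closure_le]
      intro x hx
      simp only [Finset.coe_union, Finset.coe_image, Finset.coe_univ, Set.image_univ,
        Set.mem_union, Set.mem_range, Set.mem_image, SetLike.mem_coe] at hx ⊢
      rcases hx with ⟨t, rfl⟩ | ⟨y, hy, rfl⟩
      · exact hgH t
      · have : y ∈ H.subgroupOf f.ker := by rw [← hS]; exact Subgroup.subset_closure hy
        exact this
    intro x hx
    obtain ⟨c, hc, hcx⟩ := h1 ⟨x, hx, rfl⟩
    have h5 := h2 (c⁻¹ * x) (H.mul_mem (H.inv_mem (h4 hc)) hx) (by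
      rw [MonoidHom.mem_ker, map_mul, map_inv, hcx, inv_mul_cancel])
    have := C.mul_mem hc h5
    rwa [mul_inv_cancel_left] at this

theorem slender_prod {G H : Type*} [Group G] [Group H] (hG : Group.Slender G)
    (hH : Group.Slender H) : Group.Slender (G × H) := by
  refine slender_ext (MonoidHom.fst G H) hG ?_
  refine slender_of_injective ((MonoidHom.snd G H).comp (MonoidHom.fst G H).ker.subtype) ?_ hH
  rintro ⟨⟨a, b⟩, ha⟩ ⟨⟨a', b'⟩, ha'⟩ h
  have h1 : a = 1 := ha
  have h2 : a' = 1 := ha'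
  have h3 : b = b' := h
  subst h1 h2 h3
  rfl

theorem slender_pi (k : ℕ) (G : Fin k → Type) [∀ i, Group (G i)] (h : ∀ i, Group.Slender (G i)) :
    Group.Slender (∀ i, G i) := by
  induction k with
  | zero => exact slender_of_finite
  | succ k ih =>
    have h1 := slender_prod (h 0) (ih (fun i => G i.succ) fun i => h i.succ)
    refine slender_of_injective (MonoidHom.prod (Pi.evalMonoidHom G 0)
      (MonoidHom.pi fun i : Fin k => Pi.evalMonoidHom G i.succ)) ?_ h1
    intro x y hxy
    have h2 := Prod.ext_iff.mp hxy
    funext i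
    refine Fin.cases h2.1 (fun i => congrFun h2.2 i) i

/-- A group generated by a finite conjugation-closed set of involutions is finite. -/
theorem finite_closure_involutions {G : Type*} [Group G] (R : Set G) (hR : R.Finite)
    (hsq : ∀ a ∈ R, a * a = 1) (hconj : ∀ a ∈ R, ∀ b ∈ R, a * b * a ∈ R) :
    Finite (Subgroup.closure R) := by
  classical
  have := hR.fintype
  have key : ∀ n, ∀ l : List R, l.length = n → ∃ l' : List R, l'.Nodup ∧
      (l'.map Subtype.val).prod = (l.map Subtype.val).prod := by
    intro n
    induction n using Nat.strong_induction_on with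
    | _ n ih =>
      intro l hl
      by_cases hnd : l.Nodup
      · exact ⟨l, hnd, rfl⟩
      · obtain ⟨a, ha⟩ : ∃ a, [a, a].Sublist l := by
          rw [List.nodup_iff_sublist] at hnd
          push Not at hnd
          exact hnd
        obtain ⟨r1, r2, rfl, h1, h2⟩ := List.cons_sublist_iff.mp ha
        obtain ⟨l1, l2, rfl⟩ := List.append_of_mem h1
        obtain ⟨l3, l4, rfl⟩ := List.append_of_mem (List.singleton_sublist.mp h2)
        set cj : R → R := fun b => ⟨a * b * a, hconj a a.2 b b.2⟩ with hcj
        have hp : ∀ m : List R, ((m.map cj).map Subtype.val).prod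
            = a * (m.map Subtype.val).prod * a := by
          intro m
          induction m with
          | nil => simp [hsq a a.2]
          | cons b m ihm =>
            rw [List.map_cons, List.map_cons, List.prod_cons, ihm, List.map_cons, List.prod_cons]
            calc (a : G) * b * a * (a * (m.map Subtype.val).prod * a)
                = a * b * (a * a) * (m.map Subtype.val).prod * a := by group
              _ = _ := by rw [hsq a a.2]; group
        obtain ⟨l', hl', hprod⟩ := ih (l1 ++ (l2 ++ l3).map cj ++ l4).length (by
          subst hl; simp) _ rfl
        refine ⟨l', hl', hprod.trans ?_⟩
        rw [List.map_append, List.map_append, List.prod_append, List.prod_append, hp]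
        simp only [List.map_append, List.prod_append, List.map_cons, List.prod_cons]
        group
  have hsurj : ∀ g ∈ Subgroup.closure R, ∃ l : List R, l.Nodup ∧ (l.map Subtype.val).prod = g := by
    intro g hg
    rw [← Subgroup.mem_toSubmonoid, Subgroup.closure_toSubmonoid] at hg
    obtain ⟨l, hl, rfl⟩ := Submonoid.exists_list_of_mem_closure hg
    have hl' : ∀ x ∈ l, x ∈ R := by
      intro x hx
      rcases hl x hx with h | h
      · exact h
      · have h1 := hsq _ h
        rw [← mul_inv_rev, inv_eq_one] at h1
        rw [Set.mem_inv] at h; rwa [inv_eq_of_mul_eq_one_left h1] at h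
    lift l to List R using hl'
    exact key _ l rfl
  have hfin : {l : List R | l.length ≤ Fintype.card R}.Finite := List.finite_length_le _ _
  refine Set.Finite.subset (hfin.image fun l => (l.map Subtype.val).prod) ?_
  intro g hg
  obtain ⟨l, hl, rfl⟩ := hsurj g hg
  exact ⟨l, hl.length_le_card, rfl⟩

theorem finite_of_separated {X : Type*} [PseudoMetricSpace X] {s : Set X} (hs : TotallyBounded s)
    {ε : ℝ} (hε : 0 < ε) (h : ∀ x ∈ s, ∀ y ∈ s, dist x y < ε → x = y) : s.Finite := by
  obtain ⟨t, ht, hst⟩ := Metric.totallyBounded_iff.mp hs (ε / 2) (half_pos hε)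
  have : s ⊆ ⋃ y ∈ t, (s ∩ Metric.ball y (ε / 2)) := by
    intro x hx
    obtain ⟨y, hy, hxy⟩ := Set.mem_iUnion₂.mp (hst hx)
    exact Set.mem_iUnion₂.mpr ⟨y, hy, hx, hxy⟩
  refine Set.Finite.subset (ht.biUnion fun y _ => ?_) this
  apply Set.Subsingleton.finite
  rintro a ⟨ha, ha'⟩ b ⟨hb, hb'⟩
  refine h a ha b hb ?_
  rw [Metric.mem_ball] at ha' hb'
  have := dist_triangle_right a b y
  linarith

end SlenderClosure

section EuclSlender

variable {d : ℕ}

/-- Linear part of an isometry. -/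
noncomputable def linPart : (EuclideanSpace ℝ (Fin d) ≃ᵢ EuclideanSpace ℝ (Fin d)) →*
    (EuclideanSpace ℝ (Fin d) ≃ₗᵢ[ℝ] EuclideanSpace ℝ (Fin d)) where
  toFun f := f.toRealLinearIsometryEquiv
  map_one' := by
    ext x : 1
    simp
  map_mul' f g := by
    ext x : 1
    have h := map_sub f.toRealLinearIsometryEquiv (g x) (g 0)
    simp only [IsometryEquiv.toRealLinearIsometryEquiv_apply] at h
    simp only [LinearIsometryEquiv.coe_mul, Function.comp_apply,
      IsometryEquiv.toRealLinearIsometryEquiv_apply, IsometryEquiv.mul_apply]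
    rw [h]
    abel

theorem linPart_sub (f : EuclideanSpace ℝ (Fin d) ≃ᵢ EuclideanSpace ℝ (Fin d)) (x y : EuclideanSpace ℝ (Fin d)) : linPart f (x - y) = f x - f y := by
  rw [map_sub]
  show (f x - f 0) - (f y - f 0) = _
  abel

theorem linPart_apply (f : EuclideanSpace ℝ (Fin d) ≃ᵢ EuclideanSpace ℝ (Fin d)) (x : EuclideanSpace ℝ (Fin d)) : linPart f x = f x - f 0 := rfl

theorem refl_fix {f : EuclideanSpace ℝ (Fin d) ≃ᵢ EuclideanSpace ℝ (Fin d)} (hf : f * f = 1) : ∃ p, f p = p := by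
  refine ⟨midpoint ℝ 0 (f 0), ?_⟩
  rw [f.map_midpoint, midpoint_comm, ← IsometryEquiv.mul_apply, hf]
  rfl

/-- The direction of the mirror. -/
theorem refl_dir {f : EuclideanSpace ℝ (Fin d) ≃ᵢ EuclideanSpace ℝ (Fin d)} (hf : IsAffineReflection f) :
    ∃ s : AffineSubspace ℝ (EuclideanSpace ℝ (Fin d)), (s : Set (EuclideanSpace ℝ (Fin d))) = {x | f x = x} ∧ (s : Set (EuclideanSpace ℝ (Fin d))).Nonempty ∧
      Module.finrank ℝ s.direction + 1 = d ∧ ∀ x, x ∈ s.direction ↔ linPart f x = x := by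
  obtain ⟨h1, h2, s, hs, hd⟩ := hf
  obtain ⟨p, hp⟩ := refl_fix h1
  have hps : p ∈ (s : Set (EuclideanSpace ℝ (Fin d))) := by rw [hs]; exact hp
  refine ⟨s, hs, ⟨p, hps⟩, hd, fun x => ?_⟩
  rw [← AffineSubspace.vadd_mem_iff_mem_direction x hps, ← SetLike.mem_coe, hs]
  have := linPart_sub f (x + p) p
  rw [add_sub_cancel_right, hp] at this
  rw [this, sub_eq_iff_eq_add]
  rfl

theorem linPart_eq_of_dir {f g : EuclideanSpace ℝ (Fin d) ≃ᵢ EuclideanSpace ℝ (Fin d)} (hf : f * f = 1) (hg : g * g = 1)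
    (h : ∀ x, linPart f x = x ↔ linPart g x = x) : linPart f = linPart g := by
  have key : ∀ f : EuclideanSpace ℝ (Fin d) ≃ᵢ EuclideanSpace ℝ (Fin d), f * f = 1 → ∀ x, ∃ u v : EuclideanSpace ℝ (Fin d), x = u + v ∧ linPart f u = u ∧
      linPart f v = - v := by
    intro f hf x
    have h1 : linPart f (linPart f x) = x := by
      have : linPart (f * f) x = x := by rw [hf, map_one]; rfl
      rwa [map_mul] at this
    refine ⟨(2 : ℝ)⁻¹ • (x + linPart f x), (2 : ℝ)⁻¹ • (x - linPart f x), ?_, ?_, ?_⟩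
    · rw [← smul_add, add_add_sub_cancel, ← two_smul ℝ, smul_smul]; norm_num
    · rw [map_smul, map_add, h1, add_comm]
    · rw [map_smul, map_sub, h1, ← smul_neg, neg_sub]
  have orth : ∀ f : EuclideanSpace ℝ (Fin d) ≃ᵢ EuclideanSpace ℝ (Fin d), ∀ u v : EuclideanSpace ℝ (Fin d), linPart f u = u → linPart f v = - v →
      inner ℝ u v = 0 := by
    intro f u v hu hv
    have h1 := (linPart f).inner_map_map u v
    rw [hu, hv, inner_neg_right] at h1
    linarith
  ext x : 1
  obtain ⟨u, v, hx, hu, hv⟩ := key f hf x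
  obtain ⟨u', v', hx', hu', hv'⟩ := key g hg x
  have hu2 := (h u').mpr hu'
  have hd : linPart f (u - u') = u - u' := by rw [map_sub, hu, hu2]
  have e : u - u' = v' - v := by
    have := hx.symm.trans hx'
    rw [sub_eq_sub_iff_add_eq_add, this, add_comm]
  have o1 := orth f _ _ hd hv
  have o2 := orth g _ _ ((h _).mp hd) hv'
  have : inner ℝ (u - u') (u - u') = (0 : ℝ) := by
    nth_rewrite 2 [e]
    rw [inner_sub_right, o1, o2, sub_zero]
  rw [inner_self_eq_zero] at this
  have h3 : u = u' := sub_eq_zero.mp this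
  have h4 : v = v' := by
    rw [this] at e
    exact (sub_eq_zero.mp e.symm).symm
  nth_rewrite 1 [hx]
  rw [hx', map_add, map_add, hu, hv, hu', hv', h3, h4]

theorem common_fix {f g : EuclideanSpace ℝ (Fin d) ≃ᵢ EuclideanSpace ℝ (Fin d)} (hf : IsAffineReflection f) (hg : IsAffineReflection g)
    (h : linPart f ≠ linPart g) : ∃ p, f p = p ∧ g p = p := by
  obtain ⟨s, hs, hsn, hsd, hsx⟩ := refl_dir hf
  obtain ⟨t, ht, htn, htd, htx⟩ := refl_dir hg
  have hne : s.direction ≠ t.direction := by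
    intro he
    apply h
    refine linPart_eq_of_dir hf.1 hg.1 fun x => ?_
    rw [← hsx, ← htx, he]
  have htop : s.direction ⊔ t.direction = ⊤ := by
    have hlt : s.direction < s.direction ⊔ t.direction := by
      refine lt_of_le_of_ne le_sup_left fun he => hne ?_
      have hle : t.direction ≤ s.direction := by rw [he]; exact le_sup_right
      exact (Submodule.eq_of_le_of_finrank_eq hle (by omega)).symm
    have h1 := Submodule.finrank_lt_finrank_of_lt hlt
    refine Submodule.eq_top_of_finrank_eq (le_antisymm (Submodule.finrank_le _) ?_)
    rw [finrank_euclideanSpace_fin]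
    omega
  obtain ⟨p, hp1, hp2⟩ := AffineSubspace.inter_nonempty_of_nonempty_of_sup_direction_eq_top
    hsn htn htop
  rw [hs] at hp1
  rw [ht] at hp2
  exact ⟨p, hp1, hp2⟩

theorem refl_conj {f g : EuclideanSpace ℝ (Fin d) ≃ᵢ EuclideanSpace ℝ (Fin d)} (hf : f * f = 1) (hg : IsAffineReflection g) :
    IsAffineReflection (f * g * f) := by
  obtain ⟨h1, h2, s, hs, hd⟩ := hg
  have hff : ∀ x, f (f x) = x := fun x => by rw [← IsometryEquiv.mul_apply, hf]; rfl
  refine ⟨?_, ?_, s.map f.toRealAffineIsometryEquiv.toAffineEquiv.toAffineMap, ?_, ?_⟩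
  · calc f * g * f * (f * g * f) = f * g * (f * f) * g * f := by group
      _ = f * (g * g) * f := by rw [hf]; group
      _ = 1 := by rw [h1, mul_one, hf]
  · intro h
    apply h2
    calc g = (f * f) * g * (f * f) := by rw [hf]; group
      _ = f * (f * g * f) * f := by group
      _ = 1 := by rw [h, mul_one, hf]
  · rw [AffineSubspace.coe_map, hs]
    ext x
    constructor
    · rintro ⟨y, hy, rfl⟩
      show f (g (f (f y))) = f y
      rw [hff, hy]
    · intro hx
      have hx' : f (g (f x)) = x := hx
      refine ⟨f x, ?_, hff x⟩
      show g (f x) = f x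
      rw [← hff (g (f x)), hx']
  · rw [AffineSubspace.map_direction]
    refine Eq.trans (congrArg (· + 1) ?_) hd
    exact LinearEquiv.finrank_map_eq f.toRealAffineIsometryEquiv.linearIsometryEquiv.toLinearEquiv
      s.direction

/-- The linear part as a continuous linear map. -/
noncomputable def linC (f : EuclideanSpace ℝ (Fin d) ≃ᵢ EuclideanSpace ℝ (Fin d)) :
    EuclideanSpace ℝ (Fin d) →L[ℝ] EuclideanSpace ℝ (Fin d) :=
  ((linPart f).toContinuousLinearEquiv : EuclideanSpace ℝ (Fin d) →L[ℝ] EuclideanSpace ℝ (Fin d))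

theorem linC_apply (f : EuclideanSpace ℝ (Fin d) ≃ᵢ EuclideanSpace ℝ (Fin d)) (x : EuclideanSpace ℝ (Fin d)) : linC f x = linPart f x := rfl

theorem linPart_eq_of_linC {f g : EuclideanSpace ℝ (Fin d) ≃ᵢ EuclideanSpace ℝ (Fin d)} (h : linC f = linC g) : linPart f = linPart g := by
  ext x : 1
  exact DFunLike.congr_fun h x

theorem exists_gap {X : Type*} {S : Set X} (hS : S.Finite) (φ : X → ℝ) :
    ∃ ε > 0, ∀ x ∈ S, 0 < φ x → ε ≤ φ x := by
  induction S, hS using Set.Finite.induction_on with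
  | empty => exact ⟨1, one_pos, by simp⟩
  | @insert a S _ _ ih =>
    obtain ⟨ε, hε, h⟩ := ih
    by_cases ha : 0 < φ a
    · refine ⟨min ε (φ a), lt_min hε ha, ?_⟩
      rintro x (rfl | hx) h0
      · exact min_le_right _ _
      · exact (min_le_left _ _).trans (h x hx h0)
    · refine ⟨ε, hε, ?_⟩
      rintro x (rfl | hx) h0
      · exact absurd h0 ha
      · exact h x hx h0

theorem refl_separated {W : Subgroup (EuclideanSpace ℝ (Fin d) ≃ᵢ EuclideanSpace ℝ (Fin d))} (hW : IsIrreducibleEuclideanReflectionSubgroup W) :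
    ∃ ε > 0, ∀ f ∈ W, ∀ g ∈ W, IsAffineReflection f → IsAffineReflection g →
      dist (linC f) (linC g) < ε → linPart f = linPart g := by
  obtain ⟨K, hK, hKc⟩ := hW.compact_quotient
  obtain ⟨ε, hε, hgap⟩ := exists_gap (hW.properly_discontinuous K K hK hK)
    (fun f => ‖linC f - 1‖)
  refine ⟨ε, hε, fun f hf g hg hfr hgr hdist => ?_⟩
  by_contra hne
  obtain ⟨p, hpf, hpg⟩ := common_fix hfr hgr hne
  obtain ⟨h, hh, hpK⟩ := hKc p
  set k := h * (f * g) * h⁻¹ with hk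
  have hkW : k ∈ W := W.mul_mem (W.mul_mem hh (W.mul_mem hf hg)) (W.inv_mem hh)
  have hkp : k (h p) = h p := by
    have : h⁻¹ (h p) = p := by rw [← IsometryEquiv.mul_apply, inv_mul_cancel]; rfl
    simp only [hk, IsometryEquiv.mul_apply]
    rw [this, hpg, hpf]
  have hgg : ∀ y, linPart g (linPart g y) = y := by
    intro y
    have : linPart (g * g) y = y := by rw [hgr.1, map_one]; rfl
    rwa [map_mul] at this
  have hk1 : linC k ≠ 1 := by
    intro he
    apply hne
    have h1 : linPart k = 1 := by
      ext x : 1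
      exact DFunLike.congr_fun he x
    rw [hk, map_mul, map_mul, map_inv, mul_inv_eq_one, mul_eq_left, map_mul] at h1
    ext y : 1
    have h2 := DFunLike.congr_fun h1 (linPart g y)
    have h3 : linPart f (linPart g (linPart g y)) = linPart g y := h2
    rwa [hgg] at h3
  have h1 := hgap k ⟨hkW, h p, ⟨h p, hpK, hkp⟩, hpK⟩ (norm_pos_iff.mpr (sub_ne_zero.mpr hk1))
  have h2 : ‖linC k - 1‖ ≤ ‖linC f - linC g‖ := by
    refine ContinuousLinearMap.opNorm_le_bound _ (norm_nonneg _) fun x => ?_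
    set y := linPart h⁻¹ x with hy
    have hyx : linPart h y = x := by
      have : linPart (h * h⁻¹) x = x := by rw [mul_inv_cancel, map_one]; rfl
      rwa [map_mul] at this
    have e1 : (linC k - 1) x = linPart h ((linC f - linC g) (linPart g y)) := by
      show linPart k x - x = linPart h (linPart f (linPart g y) - linPart g (linPart g y))
      rw [hgg, map_sub, hyx, hk, map_mul, map_mul, map_mul]
      rfl
    rw [e1, LinearIsometryEquiv.norm_map]
    refine (ContinuousLinearMap.le_opNorm _ _).trans_eq ?_
    rw [LinearIsometryEquiv.norm_map, hy, LinearIsometryEquiv.norm_map]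
  rw [dist_eq_norm] at hdist
  linarith

theorem refl_finite {W : Subgroup (EuclideanSpace ℝ (Fin d) ≃ᵢ EuclideanSpace ℝ (Fin d))} (hW : IsIrreducibleEuclideanReflectionSubgroup W) :
    (linPart '' {f | f ∈ W ∧ IsAffineReflection f}).Finite := by
  obtain ⟨ε, hε, hsep⟩ := refl_separated hW
  have h1 : (linC '' {f | f ∈ W ∧ IsAffineReflection f}).Finite := by
    refine finite_of_separated (ε := ε) ?_ hε ?_
    · refine TotallyBounded.subset ?_ (isCompact_closedBall (0 : EuclideanSpace ℝ (Fin d) →L[ℝ] EuclideanSpace ℝ (Fin d)) 1).totallyBounded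
      rintro _ ⟨f, -, rfl⟩
      rw [mem_closedBall_zero_iff]
      refine ContinuousLinearMap.opNorm_le_bound _ zero_le_one fun x => ?_
      rw [linC_apply, LinearIsometryEquiv.norm_map, one_mul]
    · rintro _ ⟨f, hf, rfl⟩ _ ⟨g, hg, rfl⟩ hfg
      have := hsep f hf.1 g hg.1 hf.2 hg.2 hfg
      ext1 x
      rw [linC_apply, linC_apply, this]
  refine Set.Finite.of_finite_image (f := fun A =>
    (A.toContinuousLinearEquiv : EuclideanSpace ℝ (Fin d) →L[ℝ] EuclideanSpace ℝ (Fin d))) ?_ ?_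
  · rw [Set.image_image]
    exact h1
  · intro A _ B _ h
    ext x : 1
    exact DFunLike.congr_fun h x

theorem point_group_finite {W : Subgroup (EuclideanSpace ℝ (Fin d) ≃ᵢ EuclideanSpace ℝ (Fin d))}
    (hW : IsIrreducibleEuclideanReflectionSubgroup W) : Finite (W.map linPart) := by
  have h := finite_closure_involutions _ (refl_finite hW) (by
    rintro _ ⟨f, hf, rfl⟩
    rw [← map_mul, hf.2.1, map_one]) (by
    rintro _ ⟨f, hf, rfl⟩ _ ⟨g, hg, rfl⟩
    refine ⟨f * g * f, ⟨W.mul_mem (W.mul_mem hf.1 hg.1) hf.1, refl_conj hf.2.1 hg.2⟩, ?_⟩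
    rw [map_mul, map_mul])
  rw [hW.generated_by_reflections, MonoidHom.map_closure]
  exact h

/-- Translation lattice. -/
def transLat (W : Subgroup (EuclideanSpace ℝ (Fin d) ≃ᵢ EuclideanSpace ℝ (Fin d))) :
    AddSubgroup (EuclideanSpace ℝ (Fin d)) where
  carrier := {v | ∃ f ∈ W, (∀ x, f x = x + v)}
  zero_mem' := ⟨1, W.one_mem, fun x => by rw [add_zero]; rfl⟩
  add_mem' := by
    rintro v w ⟨f, hf, hfv⟩ ⟨g, hg, hgw⟩
    refine ⟨f * g, W.mul_mem hf hg, fun x => ?_⟩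
    rw [IsometryEquiv.mul_apply, hfv, hgw]
    abel
  neg_mem' := by
    rintro v ⟨f, hf, hfv⟩
    refine ⟨f⁻¹, W.inv_mem hf, fun x => ?_⟩
    have : f⁻¹ (f (x + -v)) = x + -v := by
      rw [← IsometryEquiv.mul_apply, inv_mul_cancel]; rfl
    rwa [hfv, neg_add_cancel_right] at this

theorem transLat_discrete {W : Subgroup (EuclideanSpace ℝ (Fin d) ≃ᵢ EuclideanSpace ℝ (Fin d))}
    (hW : IsIrreducibleEuclideanReflectionSubgroup W) : DiscreteTopology (transLat W) := by
  have h1 : ((transLat W : Set (EuclideanSpace ℝ (Fin d))) ∩ Metric.closedBall 0 1).Finite := by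
    refine Set.Finite.subset ((hW.properly_discontinuous {0} (Metric.closedBall 0 1)
      isCompact_singleton (isCompact_closedBall _ _)).image fun f => f 0) ?_
    rintro v ⟨⟨f, hf, hfv⟩, hv⟩
    have : f 0 = v := by rw [hfv, zero_add]
    refine ⟨f, ⟨hf, v, ⟨0, rfl, this⟩, hv⟩, this⟩
  rw [discreteTopology_iff_isOpen_singleton_zero]
  refine ⟨Metric.ball 0 1 ∩ (((transLat W : Set (EuclideanSpace ℝ (Fin d))) ∩ Metric.closedBall 0 1) \ {0})ᶜ,
    Metric.isOpen_ball.inter (h1.subset Set.sdiff_subset).isClosed.isOpen_compl, ?_⟩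
  ext ⟨v, hv⟩
  constructor
  · rintro ⟨h2, h3⟩
    by_contra h4
    refine h3 ⟨⟨hv, Metric.ball_subset_closedBall h2⟩, fun h5 => h4 ?_⟩
    exact Subtype.ext h5
  · intro h2
    have h2' : v = 0 := congrArg Subtype.val h2
    subst h2'
    exact ⟨Metric.mem_ball_self one_pos, fun h => h.2 rfl⟩

theorem transLat_slender {W : Subgroup (EuclideanSpace ℝ (Fin d) ≃ᵢ EuclideanSpace ℝ (Fin d))}
    (hW : IsIrreducibleEuclideanReflectionSubgroup W) :
    Group.Slender (Multiplicative (transLat W)) := by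
  have h1 := transLat_discrete hW
  have h2 : DiscreteTopology (AddSubgroup.toIntSubmodule (transLat W)) := h1
  have h3 : Module.Finite ℤ (AddSubgroup.toIntSubmodule (transLat W)) := inferInstance
  have h4 : Module.Finite ℤ (transLat W) := h3
  have h5 : IsNoetherian ℤ (transLat W) := inferInstance
  intro K
  rw [Subgroup.fg_iff_add_fg]
  have h6 := h5.noetherian (AddSubgroup.toIntSubmodule
    ((Subgroup.toAddSubgroup K : AddSubgroup (transLat W))))
  rw [Submodule.fg_iff_addSubgroup_fg] at h6
  exact h6

theorem euclidean_slender {W : Subgroup (EuclideanSpace ℝ (Fin d) ≃ᵢ EuclideanSpace ℝ (Fin d))}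
    (hW : IsIrreducibleEuclideanReflectionSubgroup W) : Group.Slender W := by
  have hfin := point_group_finite hW
  set ρ : W →* W.map linPart := linPart.subgroupMap W with hρ
  refine slender_ext ρ slender_of_finite ?_
  have hker : ∀ f : ρ.ker, ∀ x, (f : W).1 x = x + (f : W).1 0 := by
    rintro ⟨f, hf⟩ x
    have h1 : linPart f.1 = 1 := congrArg Subtype.val (MonoidHom.mem_ker.mp hf)
    have h2 : linPart f.1 x = x := by rw [h1]; rfl
    rw [linPart_apply] at h2
    exact sub_eq_iff_eq_add.mp h2
  refine slender_of_injective (H := Multiplicative (transLat W))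
    { toFun := fun f => Multiplicative.ofAdd ⟨(f : W).1 0, (f : W).1, (f : W).2, hker f⟩
      map_one' := rfl
      map_mul' := fun f g => ?_ } ?_ (transLat_slender hW)
  · rw [← ofAdd_add]
    congr 1
    apply Subtype.ext
    show (f : W).1 ((g : W).1 0) = (f : W).1 0 + (g : W).1 0
    rw [hker f, add_comm]
  · intro f g h
    have h0 : (f : W).1 0 = (g : W).1 0 := congrArg Subtype.val h
    apply Subtype.ext
    apply Subtype.ext
    ext1 x
    rw [hker f, hker g, h0]

end EuclSlender

/-- An infinite finitely generated Coxeter group `C(Γ)` is slender if and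
only if it decomposes as a direct product `C(Γ) ≅ C(Γ₁) × C(Γ₂)` where `Γ₁`, `Γ₂` are induced
subgraphs of `Γ` (given by subsets `S₁`, `S₂` of the vertex set), `C(Γ₁)` is finite, and
`C(Γ₂)` is a finite direct product of irreducible Euclidean reflection groups. -/
theorem coxeterGroup_slender_iff_decomposition
    {V : Type} [Fintype V] (M : CoxeterMatrix V) (hinf : Infinite M.Group) :
    Group.Slender M.Group ↔
      ∃ S₁ S₂ : Set V,
        Nonempty (M.Group ≃* (M.restrict S₁).Group × (M.restrict S₂).Group) ∧
        Finite (M.restrict S₁).Group ∧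
        ∃ (k : ℕ) (d : Fin k → ℕ)
          (W : ∀ i : Fin k,
            Subgroup (EuclideanSpace ℝ (Fin (d i)) ≃ᵢ EuclideanSpace ℝ (Fin (d i)))),
          (∀ i, IsIrreducibleEuclideanReflectionSubgroup (W i)) ∧
          Nonempty ((M.restrict S₂).Group ≃* ∀ i, ↥(W i)) := by
  constructor
  · exact decomposition_of_slender M
  · rintro ⟨S₁, S₂, ⟨φ⟩, hfin, k, d, W, hW, ⟨ψ⟩⟩
    have h2 : Group.Slender (M.restrict S₂).Group :=
      slender_of_injective ψ.toMonoidHom ψ.injective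
        (slender_pi k (fun i => W i) fun i => euclidean_slender (hW i))
    exact slender_of_injective φ.toMonoidHom φ.injective (slender_prod slender_of_finite h2)
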